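/- arXiv:math/0609220 — 3 statements merged into one kernel-verified Lean document; each statement's English description precedes it below -/
import Mathlib

section
/- Let p : E → B be a continuous map and {U_α} a numerable open cover of B such that for each α there is a topological space F_α with p fiber homotopy trivial over U_α with fiber F_α. Then p has the WCHP. -/
/-!
The proof extends a partial lift step by step inside the sets `U α`, without ever inserting a pause.
Suppose `L` lifts a path up to time `b`, and the path stays in `U α` around `b`. Write `h`, `k` for
the trivialization over `U α`. Over the short interval just before `b`, move `L` vertically along
the homotopy from `id` to `k ∘ h`, so that at time `b` it equals `k (h (L b))`; after `b`, continue
by `k` with the `F`-coordinate of `h (L b)` held fixed. This needs only the homotopy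
`k ∘ h ≃ id`, and alters `L` only shortly before `b`. At the start `b = 0` the vertical
motion takes place in negative time, which is what the delay in the WCHP allows (`exists_ext`).

To do this for all `x : X` at once, extend the homotopy to real times and normalize the partition
of unity to a locally finite family `ν α` with some `ν α ≥ 1` at each point (`exists_nu`). A
continuous Lebesgue number `η` (`exists_eta`) allows time to be rescaled so that on
`[n - 1, n + 1]` the path of `x` stays in every `U α` with `ν α ≥ 1/2` at time `n`. A round
at `n` performs the extension for each `α`, replacing the current endpoint `b` by
`max b (n + g)` with a cutoff `g` of `ν α` that vanishes for `ν α ≤ 3/4` and equals `1` for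
`ν α ≥ 1`; after the round the endpoint is exactly `n + 1`. Since each extension is
the identity at points `x` where its `ν α` is at most `1/2`, a round is locally a finite composition
(`exists_round`). The rounds change the lift ever later in time, so they converge locally
(`exists_lift_real`).
-/

/-!
Statement 1: if `p : E → B` is fiber homotopy trivial over each member of a numerable
open cover of `B`, then `p` has the weak covering homotopy property (WCHP).
-/


universe u v

/-- `p : E → B` has the weak covering homotopy property (WCHP): every homotopy
`H : X × [0,1] → B` whose initial stage lifts through `p` (via `h`) is covered by a
homotopy parametrized by `[-1,1]` which starts at `h`, projects to `H` on `[0,1]`,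
and is vertical (projects to the initial stage of `H`) on `[-1,0]`. -/
def IsWCHP {E B : Type u} [TopologicalSpace E] [TopologicalSpace B] (p : E → B) : Prop :=
  ∀ (X : Type v) [TopologicalSpace X] (H : X × unitInterval → B) (h : X → E),
    Continuous H → Continuous h → (∀ x, p (h x) = H (x, 0)) →
      ∃ Ht : X × (Set.Icc (-1 : ℝ) 1) → E, Continuous Ht ∧
        (∀ x, Ht (x, ⟨-1, by norm_num⟩) = h x) ∧
        (∀ (x : X) (t : Set.Icc (-1 : ℝ) 1) (ht : (0 : ℝ) ≤ (t : ℝ)),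
          p (Ht (x, t)) = H (x, ⟨(t : ℝ), ht, t.2.2⟩)) ∧
        (∀ (x : X) (t : Set.Icc (-1 : ℝ) 1), (t : ℝ) ≤ 0 → p (Ht (x, t)) = H (x, 0))

/-- `p : E → B` is fiber homotopy trivial over the open set `U` with fiber `F`:
there are fiberwise maps `h : p⁻¹(U) → U × F` and `k : U × F → p⁻¹(U)` which are
mutually inverse up to homotopies over `U` (i.e. homotopies each of whose stages
commutes with the projection to `U`). -/
def IsFHTrivialOver {E B : Type u} [TopologicalSpace E] [TopologicalSpace B]
    (p : E → B) (U : Set B) (F : Type u) (tF : TopologicalSpace F) : Prop :=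
  letI := tF
  ∃ (h : ↥(p ⁻¹' U) → ↥U × F) (k : ↥U × F → ↥(p ⁻¹' U)),
    Continuous h ∧ Continuous k ∧
      (∀ e, ((h e).1 : B) = p (e : E)) ∧ (∀ z, p ((k z : E)) = (z.1 : B)) ∧
      (∃ J : unitInterval × ↥(p ⁻¹' U) → ↥(p ⁻¹' U), Continuous J ∧
        (∀ e, J (0, e) = k (h e)) ∧ (∀ e, J (1, e) = e) ∧
        ∀ t e, p ((J (t, e) : E)) = p ((e : E))) ∧
      (∃ K : unitInterval × (↥U × F) → ↥U × F, Continuous K ∧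
        (∀ z, K (0, z) = h (k z)) ∧ (∀ z, K (1, z) = z) ∧
        ∀ t z, (((K (t, z)).1 : B)) = ((z.1 : B)))

open Set Filter Topology

/-! ### Extending a lift inside one trivializing set -/

/-- Fiberwise extension over a set `U` on which `p` is dominated by a product. The operator `ext`
takes a real parameter `s`, a point `e` over `U` and a target `y ∈ U`. For `s ≤ 0` it returns `e`;
for `0 ≤ s ≤ 1` it moves `e` inside its fiber along the homotopy `k ∘ h ≃ id`; for `s ≥ 1`
it returns `k (y, f)`, where `f` is the `F`-coordinate of `h e`, which lies over `y` exactly.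
At `s = 1` the last two agree as soon as `y = p e`, so no pause is needed in between. -/
theorem exists_ext {E B : Type u} [TopologicalSpace E] [TopologicalSpace B]
    {p : E → B} (hp : Continuous p) {U : Set B} (hU : IsOpen U)
    {F : Type u} {tF : TopologicalSpace F} (ht : IsFHTrivialOver p U F tF) :
    ∃ ext : ℝ → E → B → E,
      (∀ s e y, s ≤ 0 → ext s e y = e) ∧
      (∀ s e y, p e ∈ U → y ∈ U → (s ≤ 1 → y = p e) → p (ext s e y) = y) ∧
      (∀ (Y : Type v) [TopologicalSpace Y] (σ : Y → ℝ) (L : Y → E) (G : Y → B),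
        Continuous σ → Continuous L → Continuous G →
        (∀ y, 0 ≤ σ y → p (L y) ∈ U ∧ G y ∈ U) →
        (∀ y, σ y ≤ 1 → G y = p (L y)) →
        Continuous fun y => ext (σ y) (L y) (G y)) := by
  classical
  obtain ⟨h, k, hh, hk, hph, hpk, ⟨J, hJ, hJ0, hJ1, hpJ⟩, -⟩ := ht
  let ext : ℝ → E → B → E := fun s e y =>
    if H : p e ∈ U ∧ y ∈ U then
      ((if s ≤ 1 then J (projIcc 0 1 zero_le_one (1 - s), ⟨e, H.1⟩)
        else k (⟨y, H.2⟩, (h ⟨e, H.1⟩).2) : ↥(p ⁻¹' U)) : E)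
    else e
  have ext0 : ∀ s e y, s ≤ 0 → ext s e y = e := by
    intro s e y hs
    by_cases H : p e ∈ U ∧ y ∈ U
    · have h1 : projIcc (0 : ℝ) 1 zero_le_one (1 - s) = 1 :=
        projIcc_of_right_le _ (by linarith)
      simp only [ext, dif_pos H, if_pos (show s ≤ 1 by linarith), h1, hJ1]
    · simp only [ext, dif_neg H]
  refine ⟨ext, ext0, ?_, ?_⟩
  · intro s e y he hy hs
    have H : p e ∈ U ∧ y ∈ U := ⟨he, hy⟩
    simp only [ext, dif_pos H]
    split_ifs with h1
    · rw [hpJ]; exact (hs h1).symm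
    · rw [hpk]
  · intro Y _ σ L G hσ hL hG hO hpL
    rw [continuous_iff_continuousAt]
    intro y
    rcases lt_or_ge (σ y) 0 with hy | hy
    · refine hL.continuousAt.congr ?_
      filter_upwards [hσ.continuousAt.eventually_lt continuousAt_const hy] with z hz
      exact (ext0 _ _ _ hz.le).symm
    · let O : Set Y := {z | p (L z) ∈ U ∧ G z ∈ U}
      have hOo : IsOpen O := (hU.preimage (hp.comp hL)).inter (hU.preimage hG)
      suffices hc : ContinuousOn (fun y => ext (σ y) (L y) (G y)) O from
        hc.continuousAt (hOo.mem_nhds (hO y hy))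
      rw [continuousOn_iff_continuous_domRestrict]
      let e' : O → ↥(p ⁻¹' U) := fun z => ⟨L z, z.2.1⟩
      let g' : O → ↥U := fun z => ⟨G z, z.2.2⟩
      have he' : Continuous e' := (hL.comp continuous_subtype_val).subtype_mk _
      have hg' : Continuous g' := (hG.comp continuous_subtype_val).subtype_mk _
      have hσ' : Continuous fun z : O => σ z := hσ.comp continuous_subtype_val
      have key : Continuous fun z : O => if σ z ≤ 1 then
          J (projIcc 0 1 zero_le_one (1 - σ z), e' z) else k (g' z, (h (e' z)).2) := by
        refine Continuous.if_le ?_ ?_ hσ' continuous_const ?_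
        · exact hJ.comp ((continuous_projIcc.comp (continuous_const.sub hσ')).prodMk he')
        · exact hk.comp (hg'.prodMk (continuous_snd.comp (hh.comp he')))
        · intro z hz
          have h1 : projIcc (0 : ℝ) 1 zero_le_one (1 - σ z) = 0 :=
            projIcc_of_le_left _ (by linarith)
          rw [h1, hJ0]
          congr 1
          refine Prod.ext (Subtype.ext ?_) rfl
          rw [hph]
          exact (hpL z hz.le).symm
      refine (continuous_subtype_val.comp key).congr fun z => ?_
      have H : p (L z) ∈ U ∧ G z ∈ U := z.2
      simp only [Set.domRestrict_apply, ext, dif_pos H, Function.comp, e', g']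

/-! ### One round of extensions -/

/-- A lift of `H` on `t ≤ 0`, continued constantly, is extended to a lift on `t ≤ 1`, and is changed
only for `t > -1`. The extension operators of all `U α` are applied one after the other, in
the order of some linear order on `ι`. At a given `x` only the finitely many `α` with `c α x > 1/2`
act, so the construction is carried out separately for each `x` by a fold over a finite
list; near any `x₀` it agrees with the fold over one fixed list. -/
theorem exists_round {E B : Type u} [TopologicalSpace E] [TopologicalSpace B]
    {p : E → B} (hp : Continuous p) {ι : Type u} {U : ι → Set B}
    (hUopen : ∀ α, IsOpen (U α))
    (htriv : ∀ α, ∃ (F : Type u) (tF : TopologicalSpace F), IsFHTrivialOver p (U α) F tF)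
    {X : Type v} [TopologicalSpace X] (H : X × ℝ → B) (hH : Continuous H)
    (c : ι → X → ℝ) (hc : ∀ α, Continuous (c α))
    (hlf : LocallyFinite fun α => {x | 1 / 2 < c α x})
    (hc1 : ∀ x, ∃ α, 1 ≤ c α x)
    (hcU : ∀ α x, 1 / 2 ≤ c α x → ∀ t ∈ Icc (-1 : ℝ) 1, H (x, t) ∈ U α)
    (L : X × ℝ → E) (hL : Continuous L) (hpL : ∀ x t, p (L (x, t)) = H (x, min t 0)) :
    ∃ L' : X × ℝ → E, Continuous L' ∧ (∀ x t, p (L' (x, t)) = H (x, min t 1)) ∧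
      ∀ x t, t ≤ -1 → L' (x, t) = L (x, t) := by
  classical
  let _ : LinearOrder ι := linearOrderOfSTO (WellOrderingRel (α := ι))
  choose F tF hF using htriv
  have hext := fun α => exists_ext.{u, v} hp (hUopen α) (hF α)
  choose ext ext0 extp extc using hext
  let g : ι → X → ℝ := fun α x => max 0 (min 1 (4 * c α x - 3))
  have hg : ∀ α, Continuous (g α) := fun α => by have := hc α; fun_prop
  -- A state at `x` is a pair `(b, w)`, with `w` a path that lifts `H (x, min t b)`.
  let raw : X → ℝ × (ℝ → E) → ι → ℝ × (ℝ → E) := fun x S α =>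
    (max S.1 (g α x), fun t =>
      ext α (min (4 * c α x - 2) (1 + t - S.1)) (S.2 t) (H (x, min t (max S.1 (g α x)))))
  let st : X → ℝ × (ℝ → E) → ι → ℝ × (ℝ → E) := fun x S α =>
    if 1 / 2 < c α x then raw x S α else S
  let Inv : (X → ℝ × (ℝ → E)) → Prop := fun S =>
    Continuous (fun x => (S x).1) ∧ Continuous (fun q : X × ℝ => (S q.1).2 q.2) ∧
    (∀ x, 0 ≤ (S x).1 ∧ (S x).1 ≤ 1) ∧ (∀ x t, p ((S x).2 t) = H (x, min t (S x).1)) ∧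
    (∀ x t, t ≤ -1 → (S x).2 t = L (x, t))
  have st_raw : ∀ x S α, 0 ≤ S.1 → st x S α = raw x S α := by
    intro x S α hS
    by_cases h : 1 / 2 < c α x
    · simp only [st, if_pos h]
    · have hg0 : g α x = 0 := by
        simp only [g]
        exact max_eq_left (min_le_of_right_le (by linarith))
      simp only [st, if_neg h, raw]
      refine Prod.ext ?_ (funext fun t => ?_)
      · simp only [hg0, max_eq_left hS]
      · exact (ext0 _ _ _ _ (min_le_of_left_le (by linarith))).symm
  have inv_step : ∀ S α, Inv S → Inv fun x => st x (S x) α := by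
    rintro S α ⟨h1, h2, h3, h4, h5⟩
    have e : (fun x => st x (S x) α) = fun x => raw x (S x) α :=
      funext fun x => st_raw x _ α (h3 x).1
    rw [e]
    have hb1 : ∀ x, max (S x).1 (g α x) ≤ 1 := fun x =>
      max_le (h3 x).2 (max_le zero_le_one (min_le_left _ _))
    -- Where the parameter is at most `1`, either `g α x = 0` or `t ≤ b`, so the target is unchanged.
    have hσ1 : ∀ x t, min (4 * c α x - 2) (1 + t - (S x).1) ≤ 1 →
        min t (max (S x).1 (g α x)) = min t (S x).1 := by
      intro x t h
      rcases min_le_iff.1 h with h | h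
      · have hg0 : g α x = 0 := max_eq_left (min_le_of_right_le (by linarith))
        rw [hg0, max_eq_left (h3 x).1]
      · have : t ≤ (S x).1 := by linarith
        rw [min_eq_left this, min_eq_left (this.trans (le_max_left _ _))]
    -- A nonnegative parameter forces `c α x ≥ 1/2` and `t ≥ b - 1 ≥ -1`.
    have hσ0 : ∀ x t, 0 ≤ min (4 * c α x - 2) (1 + t - (S x).1) →
        p ((S x).2 t) ∈ U α ∧ H (x, min t (max (S x).1 (g α x))) ∈ U α := by
      intro x t h
      obtain ⟨ha, hb⟩ := le_min_iff.1 h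
      have h0 := (h3 x).1
      have hm : (S x).1 ≤ max (S x).1 (g α x) := le_max_left _ _
      rw [h4]
      refine ⟨hcU α x (by linarith) _ ⟨le_min (by linarith) (by linarith), ?_⟩,
        hcU α x (by linarith) _ ⟨le_min (by linarith) (by linarith), ?_⟩⟩
      · exact min_le_of_right_le (h3 x).2
      · exact min_le_of_right_le (hb1 x)
    refine ⟨h1.max (hg α), ?_, fun x => ⟨(h3 x).1.trans (le_max_left _ _), hb1 x⟩, ?_, ?_⟩
    · have hcα := hc α
      have hgα := hg α
      refine extc α (X × ℝ) (fun q => min (4 * c α q.1 - 2) (1 + q.2 - (S q.1).1))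
        (fun q => (S q.1).2 q.2) (fun q => H (q.1, min q.2 (max (S q.1).1 (g α q.1))))
        ?_ h2 ?_ (fun q => hσ0 q.1 q.2) ?_
      · have : Continuous fun q : X × ℝ => (S q.1).1 := h1.comp continuous_fst
        fun_prop
      · have : Continuous fun q : X × ℝ => (S q.1).1 := h1.comp continuous_fst
        fun_prop
      · intro q hq
        simp only [h4, hσ1 q.1 q.2 hq]
    · intro x t
      simp only [raw]
      rcases lt_or_ge (min (4 * c α x - 2) (1 + t - (S x).1)) 0 with h | h
      · rw [ext0 _ _ _ _ h.le, h4, hσ1 x t (by linarith)]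
      · refine extp _ _ _ _ (hσ0 x t h).1 (hσ0 x t h).2 fun h' => ?_
        rw [h4, hσ1 x t h']
    · intro x t ht'
      simp only [raw]
      have h0 := (h3 x).1
      rw [ext0 _ _ _ _ (min_le_of_right_le (by linarith)), h5 x t ht']
  have inv_fold : ∀ (l : List ι) S, Inv S → Inv fun x => l.foldl (st x) (S x) := by
    intro l
    induction l with
    | nil => intro S hS; exact hS
    | cons a l ih => intro S hS; exact ih _ (inv_step S a hS)
  let S0 : X → ℝ × (ℝ → E) := fun x => (0, fun t => L (x, t))
  have hS0 : Inv S0 :=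
    ⟨continuous_const, hL, fun x => ⟨le_rfl, zero_le_one⟩, hpL, fun _ _ _ => rfl⟩
  have mono_step : ∀ x S α, S.1 ≤ (st x S α).1 := by
    intro x S α
    simp only [st]
    split_ifs
    · exact le_max_left _ _
    · exact le_rfl
  have mono_fold : ∀ x (l : List ι) S, S.1 ≤ (l.foldl (st x) S).1 := by
    intro x l
    induction l with
    | nil => intro S; exact le_rfl
    | cons a l ih => intro S; exact (mono_step x S a).trans (ih _)
  have one_fold : ∀ x α, 1 ≤ c α x → ∀ (l : List ι) S, α ∈ l → 1 ≤ (l.foldl (st x) S).1 := by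
    intro x α hα l
    induction l with
    | nil => intro S h; simp at h
    | cons a l ih =>
      intro S h
      rcases List.mem_cons.1 h with rfl | h
      · refine le_trans ?_ (mono_fold x l (st x S α))
        have hgα : g α x = 1 := by
          simp only [g]
          rw [min_eq_left (by linarith), max_eq_right zero_le_one]
        simp only [st, if_pos (show 1 / 2 < c α x by linarith), raw, hgα]
        exact le_max_right _ _
      · exact ih _ h
  let T : X → Finset ι := fun x => (hlf.point_finite x).toFinset
  have hT : ∀ x α, α ∈ T x ↔ 1 / 2 < c α x := fun x α => by simp [T]
  have sort_T : ∀ x (T0 : Finset ι), T x ⊆ T0 → ∀ S,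
      T0.sort.foldl (st x) S = (T x).sort.foldl (st x) S := by
    intro x T0 hx S
    have e : (T x).sort = T0.sort.filter (fun α => 1 / 2 < c α x) := by
      refine (Finset.sortedLT_sort _).eq_of_mem_iff ?_ ?_
      · exact ((Finset.sortedLT_sort T0).pairwise.filter _).sortedLT
      · intro a
        simp only [Finset.mem_sort, List.mem_filter, decide_eq_true_eq]
        rw [← hT]
        exact ⟨fun h => ⟨hx h, h⟩, fun h => h.2⟩
    rw [e, List.foldl_filter]
    congr 1
    funext S α
    by_cases h : 1 / 2 < c α x
    · simp only [st, decide_eq_true_eq, if_pos h]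
    · simp only [st, decide_eq_true_eq, if_neg h]
  refine ⟨fun q => ((T q.1).sort.foldl (st q.1) (S0 q.1)).2 q.2, ?_, ?_, ?_⟩
  · rw [continuous_iff_continuousAt]
    rintro ⟨x0, t0⟩
    obtain ⟨N, hN, hfin⟩ := hlf x0
    let T0 : Finset ι := hfin.toFinset
    refine ((inv_fold T0.sort S0 hS0).2.1.continuousAt (x := (x0, t0))).congr ?_
    filter_upwards [continuous_fst.continuousAt.preimage_mem_nhds hN] with q hq
    have hsub : T q.1 ⊆ T0 := ?_
    · rw [sort_T q.1 T0 hsub]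
    intro α hα
    simp only [T0, Set.Finite.mem_toFinset]
    exact ⟨q.1, (hT _ _).1 hα, hq⟩
  · intro x t
    have I := inv_fold (T x).sort S0 hS0
    obtain ⟨α, hα⟩ := hc1 x
    have hb := one_fold x α hα (T x).sort (S0 x)
      ((Finset.mem_sort _).2 ((hT x α).2 (by linarith)))
    have := I.2.2.2.1 x t
    rw [le_antisymm (I.2.2.1 x).2 hb] at this
    exact this
  · intro x t ht'
    exact (inv_fold (T x).sort S0 hS0).2.2.2.2 x t ht'

/-! ### Infinitely many rounds -/

/-- If on each interval `[n - 1, n + 1]` the path `H (x, ·)` stays in every `U α` with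
`ν α (H (x, n)) ≥ 1/2`, then the rounds at `0, 1, 2, …` can be iterated, and they stabilize
locally because the round at `n` only changes the lift for `t > n - 1`. -/
theorem exists_lift_real {E B : Type u} [TopologicalSpace E] [TopologicalSpace B]
    {p : E → B} (hp : Continuous p) {ι : Type u} {U : ι → Set B}
    (hUopen : ∀ α, IsOpen (U α))
    (htriv : ∀ α, ∃ (F : Type u) (tF : TopologicalSpace F), IsFHTrivialOver p (U α) F tF)
    (ν : ι → B → ℝ) (hν : ∀ α, Continuous (ν α))
    (hlf : LocallyFinite fun α => {b | 1 / 2 < ν α b}) (hν1 : ∀ b, ∃ α, 1 ≤ ν α b)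
    {X : Type v} [TopologicalSpace X] (H : X × ℝ → B) (hH : Continuous H)
    (hH0 : ∀ x t, t ≤ 0 → H (x, t) = H (x, 0))
    (hHU : ∀ x s t, |s - t| ≤ 1 → ∀ α, 1 / 2 ≤ ν α (H (x, s)) → H (x, t) ∈ U α)
    (h : X → E) (hh : Continuous h) (hph : ∀ x, p (h x) = H (x, 0)) :
    ∃ L : X × ℝ → E, Continuous L ∧ (∀ x t, p (L (x, t)) = H (x, t)) ∧
      ∀ x t, t ≤ -1 → L (x, t) = h x := by
  have step : ∀ (n : ℕ) (L : X × ℝ → E),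
      (Continuous L ∧ ∀ x t, p (L (x, t)) = H (x, min t n)) →
      ∃ L' : X × ℝ → E, (Continuous L' ∧ ∀ x t, p (L' (x, t)) = H (x, min t (n + 1 : ℕ))) ∧
        ∀ x (t : ℝ), t ≤ (n : ℝ) - 1 → L' (x, t) = L (x, t) := by
    rintro n L ⟨hL, hpL⟩
    have hsh : Continuous fun q : X × ℝ => (q.1, q.2 + n) := by fun_prop
    have hn : Continuous fun x : X => H (x, (n : ℝ)) := by fun_prop
    obtain ⟨L', hL', hpL', hLL⟩ := exists_round hp hUopen htriv
      (fun q : X × ℝ => H (q.1, q.2 + n)) (hH.comp hsh)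
      (fun α x => ν α (H (x, n))) (fun α => (hν α).comp hn)
      (hlf.preimage_continuous hn) (fun x => hν1 _)
      (fun α x hα t ht' => hHU x n (t + n)
        (by rw [show (n : ℝ) - (t + n) = -t by ring, abs_neg, abs_le]; exact ht') α hα)
      (fun q : X × ℝ => L (q.1, q.2 + n)) (hL.comp hsh)
      (fun x t => by
        simp only
        rw [hpL, ← min_add_add_right, zero_add])
    refine ⟨fun q => L' (q.1, q.2 - n), ⟨by fun_prop, fun x t => ?_⟩, fun x t htn => ?_⟩
    · simp only
      rw [hpL', ← min_add_add_right]
      push_cast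
      rw [sub_add_cancel, add_comm (1 : ℝ)]
    · simp only
      rw [hLL x _ (by linarith), sub_add_cancel]
  choose! f hf hfe using step
  let Ls : ℕ → X × ℝ → E := fun n => Nat.rec (fun q => h q.1) (fun n L => f n L) n
  have hLs : ∀ n, Continuous (Ls n) ∧ ∀ x t, p (Ls n (x, t)) = H (x, min t n) := by
    intro n
    induction n with
    | zero =>
      refine ⟨hh.comp continuous_fst, fun x t => ?_⟩
      change p (h x) = _
      rw [hph, Nat.cast_zero, hH0 x _ (min_le_right _ _)]
    | succ n ih => exact hf n _ ih
  have hstab : ∀ n m : ℕ, n ≤ m → ∀ x (t : ℝ), t ≤ (n : ℝ) - 1 → Ls m (x, t) = Ls n (x, t) := by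
    intro n m hnm
    induction m, hnm using Nat.le_induction with
    | base => intros; rfl
    | succ m hm ih =>
      intro x t ht'
      rw [← ih x t ht']
      have : (n : ℝ) ≤ m := by exact_mod_cast hm
      exact hfe m _ (hLs m) x t (by linarith)
  let N : ℝ → ℕ := fun t => ⌈t⌉₊ + 1
  have hN : ∀ t, t ≤ N t - 1 := fun t => by
    simp only [N]; push_cast; linarith [Nat.le_ceil t]
  have hmain : ∀ (n : ℕ) x (t : ℝ), t ≤ (n : ℝ) - 1 → Ls (N t) (x, t) = Ls n (x, t) := by
    intro n x t ht'
    rcases le_total (N t) n with h' | h'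
    · exact (hstab _ _ h' x t (hN t)).symm
    · exact hstab _ _ h' x t ht'
  refine ⟨fun q => Ls (N q.2) q, ?_, fun x t => ?_, fun x t ht' => ?_⟩
  · rw [continuous_iff_continuousAt]
    rintro ⟨x0, t0⟩
    refine ((hLs (N (t0 + 1))).1.continuousAt (x := (x0, t0))).congr ?_
    have : ∀ᶠ q : X × ℝ in 𝓝 (x0, t0), q.2 < t0 + 1 :=
      continuous_snd.continuousAt.eventually_lt continuousAt_const (by simp)
    filter_upwards [this] with q hq
    exact (hmain _ q.1 q.2 (hq.le.trans (hN _))).symm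
  · exact ((hLs (N t)).2 x t).trans (by rw [min_eq_left (by linarith [hN t])])
  · exact hmain 0 x t (by simpa using ht')

/-! ### Numerable covers and uniform steps -/

/-- Dividing `π α` by `∑ β, (π β)²` gives a locally finite family of continuous functions, at each
point of which some member is at least `1`. -/
theorem exists_nu {B : Type u} [TopologicalSpace B] {ι : Type u}
    (pou : PartitionOfUnity ι B Set.univ) :
    ∃ ν : ι → B → ℝ, (∀ α, Continuous (ν α)) ∧ (∀ α b, 0 ≤ ν α b) ∧
      (LocallyFinite fun α => Function.support (ν α)) ∧ (∀ b, ∃ α, 1 ≤ ν α b) ∧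
      ∀ α b, ν α b ≠ 0 → b ∈ tsupport (pou α) := by
  let q : B → ℝ := fun b => ∑ᶠ α, pou α b ^ 2
  have hqc : Continuous q := by
    refine continuous_finsum (fun α => by fun_prop) (pou.locallyFinite.subset fun α b hb => ?_)
    simp only [Function.mem_support] at hb ⊢
    exact fun h => hb (by simp [h])
  have hq : ∀ b, q b = ∑ α ∈ pou.finsupport b, pou α b ^ 2 := by
    intro b
    refine finsum_eq_sum_of_support_subset _ fun α hα => ?_
    rw [pou.coe_finsupport]
    simp only [Function.mem_support] at hα ⊢
    exact fun h => hα (by simp [h])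
  have hs : ∀ b, ∑ α ∈ pou.finsupport b, pou α b = 1 := fun b => pou.sum_finsupport (mem_univ b)
  have hmem : ∀ b, ∀ α ∈ pou.finsupport b, 0 < pou α b := by
    intro b α hα
    rw [pou.mem_finsupport] at hα
    exact lt_of_le_of_ne (pou.nonneg α b) (Ne.symm hα)
  have hne : ∀ b, (pou.finsupport b).Nonempty := by
    intro b
    rw [Finset.nonempty_iff_ne_empty]
    intro h
    have := hs b
    simp [h] at this
  have hqpos : ∀ b, 0 < q b := by
    intro b
    rw [hq]
    exact Finset.sum_pos (fun α hα => pow_pos (hmem b α hα) 2) (hne b)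
  refine ⟨fun α b => pou α b / q b, fun α => (pou α).continuous.div hqc fun b => (hqpos b).ne',
    fun α b => div_nonneg (pou.nonneg α b) (hqpos b).le, ?_, ?_, ?_⟩
  · refine pou.locallyFinite.subset fun α b hb => ?_
    simp only [Function.mem_support] at hb ⊢
    exact fun h => hb (by simp [h])
  · intro b
    by_contra! hlt
    have : ∑ α ∈ pou.finsupport b, pou α b ^ 2 < ∑ α ∈ pou.finsupport b, pou α b * q b := by
      refine Finset.sum_lt_sum_of_nonempty (hne b) fun α hα => ?_
      have := (div_lt_one (hqpos b)).1 (hlt α)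
      nlinarith [hmem b α hα]
    rw [← Finset.sum_mul, hs, one_mul, ← hq] at this
    exact lt_irrefl _ this
  · intro α b hb
    refine subset_tsupport _ ?_
    simp only [Function.mem_support]
    exact fun h => hb (by simp [h])

/-- A Lebesgue number depending continuously on the path: `η x` is half of
`inf |s - t| + max 0 (1/2 - D (K (x, s)) (K (x, t)))` over `s, t ∈ [0,1]`, where
`D b b' = ∑ α, max 0 (ν α b - ν α b')`. -/
theorem exists_eta {B : Type u} [TopologicalSpace B] {ι : Type u}
    (ν : ι → B → ℝ) (hν : ∀ α, Continuous (ν α)) (hν0 : ∀ α b, 0 ≤ ν α b)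
    (hlf : LocallyFinite fun α => Function.support (ν α))
    {X : Type v} [TopologicalSpace X] (K : X × unitInterval → B) (hK : Continuous K) :
    ∃ η : X → ℝ, Continuous η ∧ (∀ x, 0 < η x ∧ η x ≤ 1) ∧
      ∀ x (s t : unitInterval), |(s : ℝ) - t| ≤ η x → ∀ α, 1 / 2 ≤ ν α (K (x, s)) → ν α (K (x, t)) ≠ 0 := by
  let D : B × B → ℝ := fun b => ∑ᶠ α, max 0 (ν α b.1 - ν α b.2)
  have hsupp : ∀ (α : ι) (b : B × B), max 0 (ν α b.1 - ν α b.2) ≠ 0 → ν α b.1 ≠ 0 := by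
    intro α b hb h0
    exact hb (max_eq_left (by linarith [hν0 α b.2]))
  have hDc : Continuous D := by
    refine continuous_finsum (fun α => by have := hν α; fun_prop) ?_
    exact (hlf.preimage_continuous (continuous_fst (X := B) (Y := B))).subset
      fun α b hb => hsupp α b hb
  have hDd : ∀ b, D (b, b) = 0 := fun b => by simp [D]
  have hDge : ∀ b b' α, ν α b - ν α b' ≤ D (b, b') := by
    intro b b' α
    refine (le_max_right 0 _).trans
      (single_le_finsum (f := fun α => max 0 (ν α b - ν α b')) α ?_ fun _ => le_max_left _ _)
    exact (hlf.point_finite b).subset fun β hβ => hsupp β (b, b') hβ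
  let m : X → unitInterval × unitInterval → ℝ := fun x u =>
    |(u.1 : ℝ) - u.2| + max 0 (1 / 2 - D (K (x, u.1), K (x, u.2)))
  have hm : Continuous (Function.uncurry m) := by
    simp only [m, Function.uncurry_def]
    fun_prop
  have hmx : ∀ x, Continuous (m x) := fun x => hm.comp (Continuous.prodMk_right x)
  have hmpos : ∀ x u, 0 < m x u := by
    rintro x ⟨s, t⟩
    simp only [m]
    rcases eq_or_ne s t with rfl | hst
    · rw [hDd]; norm_num
    · have : 0 < |(s : ℝ) - t| := abs_pos.2 (sub_ne_zero.2 fun h => hst (Subtype.ext h))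
      exact add_pos_of_pos_of_nonneg this (le_max_left _ _)
  let δ : X → ℝ := fun x => sInf (m x '' univ)
  have hδc : Continuous δ := isCompact_univ.continuous_sInf hm
  have hbdd : ∀ x, BddBelow (m x '' univ) := fun x =>
    ⟨0, by rintro _ ⟨u, -, rfl⟩; exact (hmpos x u).le⟩
  have hδle : ∀ x u, δ x ≤ m x u := fun x u => csInf_le (hbdd x) ⟨u, mem_univ _, rfl⟩
  have hδpos : ∀ x, 0 < δ x := by
    intro x
    obtain ⟨u, -, hu⟩ := (isCompact_univ.image (hmx x)).sInf_mem
      (univ_nonempty.image (m x))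
    change 0 < sInf _
    rw [← hu]
    exact hmpos x u
  have hδ1 : ∀ x, δ x ≤ 1 / 2 := by
    intro x
    have := hδle x (0, 0)
    simpa [m, hDd] using this
  refine ⟨fun x => δ x / 2, by fun_prop,
    fun x => ⟨half_pos (hδpos x), by linarith [hδ1 x]⟩, ?_⟩
  intro x s t hst α hα h0
  have h1 := hDge (K (x, s)) (K (x, t)) α
  have h2 := hδle x (s, t)
  simp only [m] at h2
  rw [max_eq_left (by linarith)] at h2
  linarith [hδpos x]

/-- If `{U α}` is a numerable open cover of `B` (one carrying a subordinate partition of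
unity) and for each `α` there is a space `F α` such that `p` is fiber homotopy trivial
over `U α` with fiber `F α`, then `p` has the WCHP. -/
theorem wchp_of_locally_fiber_homotopy_trivial
    {E B : Type u} [TopologicalSpace E] [TopologicalSpace B]
    (p : E → B) (hp : Continuous p)
    {ι : Type u} (U : ι → Set B)
    (hUopen : ∀ α, IsOpen (U α)) (hUcover : ⋃ α, U α = Set.univ)
    (hnumerable : ∃ pou : PartitionOfUnity ι B Set.univ, pou.IsSubordinate U)
    (htriv : ∀ α, ∃ (F : Type u) (tF : TopologicalSpace F), IsFHTrivialOver p (U α) F tF) :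
    IsWCHP.{u, v} p := by
  intro X _ H h hH hh hph
  obtain ⟨pou, hsub⟩ := hnumerable
  obtain ⟨ν, hν, hν0, hlf, hν1, hνU⟩ := exists_nu pou
  obtain ⟨η, hη, hη01, hηU⟩ := exists_eta ν hν hν0 hlf H hH
  have hne : ∀ x, η x ≠ 0 := fun x => (hη01 x).1.ne'
  have hproj : ∀ t : ℝ, t ≤ 0 → projIcc (0 : ℝ) 1 zero_le_one t = 0 :=
    fun t ht => projIcc_of_le_left _ ht
  -- Time is rescaled by `η x`, so that unit steps become Lebesgue-small.
  obtain ⟨L, hL, hpL, hL1⟩ := exists_lift_real hp hUopen htriv ν hν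
    (hlf.subset fun α b hb => by
      simp only [Function.mem_support]
      exact ((by norm_num : (0 : ℝ) < 1 / 2).trans hb).ne') hν1
    (fun q : X × ℝ => H (q.1, projIcc 0 1 zero_le_one (q.2 * η q.1)))
    (hH.comp (continuous_fst.prodMk (continuous_projIcc.comp (by fun_prop))))
    (fun x t ht => by
      simp only
      rw [hproj _ (mul_nonpos_of_nonpos_of_nonneg ht (hη01 x).1.le), zero_mul, hproj _ le_rfl])
    (fun x s t hst α hα => by
      refine hsub α (hνU α _ (hηU x _ _ ?_ α hα))
      refine (abs_projIcc_sub_projIcc zero_le_one).trans ?_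
      rw [← sub_mul, abs_mul, abs_of_pos (hη01 x).1]
      exact mul_le_of_le_one_left (hη01 x).1.le hst)
    h hh (fun x => by
      simp only
      rw [hph, zero_mul, hproj _ le_rfl])
  refine ⟨fun q => L (q.1, (q.2 : ℝ) / η q.1), ?_, fun x => ?_, fun x t ht => ?_,
    fun x t ht => ?_⟩
  · refine hL.comp (continuous_fst.prodMk ?_)
    exact (continuous_subtype_val.comp continuous_snd).div (hη.comp continuous_fst)
      fun q => hne q.1
  · refine hL1 x _ ?_
    simp only
    rw [div_le_iff₀ (hη01 x).1]
    linarith [(hη01 x).2]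
  · simp only
    rw [hpL, div_mul_cancel₀ _ (hne x), projIcc_of_mem zero_le_one ⟨ht, t.2.2⟩]
  · simp only
    rw [hpL, div_mul_cancel₀ _ (hne x), hproj _ ht]
end

section
/- Let p : E → B be continuous, let ι be a linearly ordered index set, and let {U_α}_{α∈ι} be open subsets of B over each of which p is fiber homotopy trivial with fiber F, witnessed by h_α, k_α, together with chosen homotopies j_α over U_α from k_α∘h_α at time 0 to the identity at time 1. Then there exists a family of continuous maps, indexed by strictly decreasing finite tuples σ = (α₀ > α₁ > ⋯ > α_n) with n ≥ 1, g_σ : [0,1]^{n-1} × U_σ × F → F where U_σ = U_{α₀} ∩ ⋯ ∩ U_{α_n}, such that: (i) for n = 1, g_{(α,β)}(x,f) = ḡ_αβ(x,f), the transition function defined by h_α(k_β(x,f)) = (x, ḡ_αβ(x,f)); (ii) for every n ≥ 2 and every 1 ≤ i ≤ n-1, on the face t_i = 1 one has g_σ(t₁,…,t_{n-1},x,f) = g_{σ_i}(t₁,…,t̂_i,…,t_{n-1},x,f), where σ_i is σ with α_i deleted; and (iii) on the face t_i = 0 one has g_σ(t₁,…,t_{n-1},x,f) = g_{(α₀,…,α_i)}(t₁,…,t_{i-1},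 x, g_{(α_i,…,α_n)}(t_{i+1},…,t_{n-1}, x, f)). Such a family (a homotopy transition cocycle) is given explicitly by g_σ(t₁,…,t_{n-1},x,f) = pr_F( h_{α₀}( j_{α₁}(t₁, ⋯ j_{α_{n-1}}(t_{n-1}, k_{α_n}(x,f)) ⋯ ) ) ). -/
/-!
The explicit family `cocycle` works because the `i`-th coordinate of the cube enters only as the time
of the homotopy `j_{α_i}`. At time `1` this homotopy is the identity, so `α_i` drops out of
the iterated composite (`cocycleCore_face_one`). At time `0` it is `k_{α_i} ∘ h_{α_i}`, and everything
is over the fixed point `x`, so the composite breaks at `α_i`: the inner part followed by `pr_F ∘ h_{α_i}`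
is the value of `g_{(α_i,…,α_n)}`, which `k_{α_i}` feeds to the outer part (`cocycleCore_face_zero`).
Both facts are proved for `cocycleCore` by induction, peeling off the outermost homotopy.
Continuity follows by induction on the number of homotopies (`continuous_cocycleCore`).

The index arithmetic of the face conditions is handled by comparing tuples pointwise through the
congruence lemmas below, in which points of `E` are compared after forgetting the proofs that
they lie in a given fiber or preimage.
-/

/-!
Statement 4: existence of a homotopy transition cocycle.  Given local trivializations
`(h_α, k_α)` of `p : E → B` over opens `U_α` with fiber `F`, and homotopies `j_α` over
`U_α` from `k_α ∘ h_α` to the identity, the family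
`g_σ (t₁,…,t_{n-1}, x, f) = pr_F (h_{α₀} (j_{α₁} (t₁, ⋯ j_{α_{n-1}} (t_{n-1}, k_{α_n} (x,f)) ⋯)))`
indexed by strictly decreasing tuples `σ = (α₀ > ⋯ > α_n)` consists of continuous maps
`g_σ : [0,1]^{n-1} × U_σ × F → F` satisfying the cocycle face conditions (i), (ii), (iii).
-/


universe u

variable {E B F : Type u} [TopologicalSpace E] [TopologicalSpace B] [TopologicalSpace F]
variable {ι : Type u}

/-- The iterated core `j_{τ₀}(t₁, j_{τ₁}(t₂, ⋯ k_{τ_m}(x, f) ⋯))` of the explicit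
homotopy transition cocycle, together with the proof that it lies in the fiber over `x`. -/
def cocycleCore (p : E → B) (U : ι → Set B)
    (k : ∀ α, ↥(U α) × F → ↥(p ⁻¹' (U α)))
    (j : ∀ α, unitInterval × ↥(p ⁻¹' (U α)) → ↥(p ⁻¹' (U α)))
    (hk : ∀ α z, p ((k α z : E)) = ((z.1 : B)))
    (hj : ∀ α t e, p ((j α (t, e) : E)) = p ((e : E)))
    (x : B) :
    ∀ (m : ℕ) (τ : Fin (m + 1) → ι), (∀ i, x ∈ U (τ i)) →
      (Fin m → unitInterval) → F → {e : E // p e = x}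
  | 0, τ, hτ, _, f => ⟨(k (τ 0) (⟨x, hτ 0⟩, f) : E), hk _ _⟩
  | m + 1, τ, hτ, t, f =>
      let prev := cocycleCore p U k j hk hj x m (Fin.tail τ) (fun i => hτ i.succ)
        (Fin.tail t) f
      ⟨(j (τ 0) (t 0, ⟨prev.1, by show p (prev : E) ∈ U (τ 0); rw [prev.2]; exact hτ 0⟩) : E), by rw [hj]; exact prev.2⟩

/-- The explicit homotopy transition cocycle
`g_σ (t, x, f) = pr_F (h_{σ 0} (j_{σ 1} (t₁, ⋯ j_{σ (n)} (t_n, k_{σ (n+1)} (x, f)) ⋯)))`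
attached to a tuple `σ` of length `n + 2` (so the cube has dimension `n`). -/
def cocycle (p : E → B) (U : ι → Set B)
    (h : ∀ α, ↥(p ⁻¹' (U α)) → ↥(U α) × F)
    (k : ∀ α, ↥(U α) × F → ↥(p ⁻¹' (U α)))
    (j : ∀ α, unitInterval × ↥(p ⁻¹' (U α)) → ↥(p ⁻¹' (U α)))
    (hk : ∀ α z, p ((k α z : E)) = ((z.1 : B)))
    (hj : ∀ α t e, p ((j α (t, e) : E)) = p ((e : E)))
    (n : ℕ) (σ : Fin (n + 2) → ι) :
    ((Fin n → unitInterval) × ↥(⋂ i, U (σ i)) × F) → F := fun q =>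
  let c := cocycleCore p U k j hk hj (q.2.1 : B) n (Fin.tail σ)
    (fun i => Set.mem_iInter.mp q.2.1.2 i.succ) q.1 q.2.2
  (h (σ 0) ⟨c.1, by show p (c : E) ∈ U (σ 0); rw [c.2]; exact Set.mem_iInter.mp q.2.1.2 0⟩).2

/-- Congruence for `j α (t, e)` in `α` as well, where the types of both sides depend on `α`; hence
the values are compared in `E`. -/
theorem homotopy_apply_congr {E B ι : Type u} {p : E → B} {U : ι → Set B}
    (j : ∀ α, unitInterval × ↥(p ⁻¹' (U α)) → ↥(p ⁻¹' (U α)))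
    {α α' : ι} (hα : α = α') {t t' : unitInterval} (ht : t = t') {e e' : E} (he : e = e')
    (m : e ∈ p ⁻¹' (U α)) (m' : e' ∈ p ⁻¹' (U α')) :
    (j α (t, ⟨e, m⟩) : E) = j α' (t', ⟨e', m'⟩) := by
  subst hα ht he; rfl

theorem inverse_apply_congr {E B F ι : Type u} {p : E → B} {U : ι → Set B}
    (k : ∀ α, ↥(U α) × F → ↥(p ⁻¹' (U α)))
    {α α' : ι} (hα : α = α') {x x' : B} (hx : x = x') {f f' : F} (hf : f = f')
    (m : x ∈ U α) (m' : x' ∈ U α') :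
    (k α (⟨x, m⟩, f) : E) = k α' (⟨x', m'⟩, f') := by
  subst hα hx hf; rfl

theorem trivialization_apply_congr {E B F ι : Type u} {p : E → B} {U : ι → Set B}
    (h : ∀ α, ↥(p ⁻¹' (U α)) → ↥(U α) × F)
    {α α' : ι} (hα : α = α') {e e' : E} (he : e = e')
    (m : e ∈ p ⁻¹' (U α)) (m' : e' ∈ p ⁻¹' (U α')) :
    (h α ⟨e, m⟩).2 = (h α' ⟨e', m'⟩).2 := by
  subst hα he; rfl

section Core

variable {E B F ι : Type u} (p : E → B) (U : ι → Set B)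
    (h : ∀ α, ↥(p ⁻¹' (U α)) → ↥(U α) × F)
    (k : ∀ α, ↥(U α) × F → ↥(p ⁻¹' (U α)))
    (j : ∀ α, unitInterval × ↥(p ⁻¹' (U α)) → ↥(p ⁻¹' (U α)))
    (ko : ∀ α z, p ((k α z : E)) = ((z.1 : B)))
    (jo : ∀ α t e, p ((j α (t, e) : E)) = p ((e : E)))

theorem cocycleCore_congr (x : B) (m : ℕ) {τ τ' : Fin (m + 1) → ι} (hττ : τ = τ')
    (hτ : ∀ i, x ∈ U (τ i)) (hτ' : ∀ i, x ∈ U (τ' i))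
    {t t' : Fin m → unitInterval} (ht : t = t') {f f' : F} (hf : f = f') :
    (cocycleCore p U k j ko jo x m τ hτ t f : E) =
      cocycleCore p U k j ko jo x m τ' hτ' t' f' := by
  subst hττ ht hf; rfl

/-- The recursion of `cocycleCore`, with a free choice of the proof `hmem` so that it can be used
for rewriting. -/
theorem cocycleCore_succ (x : B) (m : ℕ) (τ : Fin (m + 2) → ι) (hτ : ∀ i, x ∈ U (τ i))
    (t : Fin (m + 1) → unitInterval) (f : F)
    (hmem : (cocycleCore p U k j ko jo x m (Fin.tail τ) (fun i => hτ i.succ) (Fin.tail t) f : E) ∈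
      p ⁻¹' (U (τ 0))) :
    (cocycleCore p U k j ko jo x (m + 1) τ hτ t f : E) = j (τ 0) (t 0, ⟨_, hmem⟩) :=
  rfl

theorem cocycleCore_mem_preimage {x : B} {m : ℕ} {τ : Fin (m + 1) → ι} {hτ : ∀ i, x ∈ U (τ i)}
    {t : Fin m → unitInterval} {f : F} {α : ι} (hx : x ∈ U α) :
    (cocycleCore p U k j ko jo x m τ hτ t f : E) ∈ p ⁻¹' (U α) := by
  rw [Set.mem_preimage, (cocycleCore p U k j ko jo x m τ hτ t f).2]
  exact hx

/-- On the face where the `i`-th time is `1`, the `i`-th homotopy is the identity and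
disappears from the iterated composite. -/
theorem cocycleCore_face_one (j1 : ∀ α e, j α (1, e) = e) (x : B) (f : F) :
    ∀ (m : ℕ) (τ : Fin (m + 2) → ι) (hτ : ∀ i, x ∈ U (τ i)) (t : Fin (m + 1) → unitInterval)
      (i : Fin (m + 1)), t i = 1 →
      (cocycleCore p U k j ko jo x (m + 1) τ hτ t f : E) =
        cocycleCore p U k j ko jo x m (τ ∘ i.castSucc.succAbove) (fun _ => hτ _)
          (t ∘ i.succAbove) f := by
  intro m
  induction m with
  | zero =>
    intro τ hτ t i hi
    obtain rfl : i = 0 := Fin.fin_one_eq_zero i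
    rw [cocycleCore_succ p U k j ko jo x 0 τ hτ t f
      (cocycleCore_mem_preimage p U k j ko jo (hτ 0)), hi, j1]
    exact cocycleCore_congr p U k j ko jo x 0 (by ext i; simp)
      (fun i => hτ i.succ) _ (Subsingleton.elim (Fin.tail t) _) rfl
  | succ m ih =>
    intro τ hτ t i hi
    rw [cocycleCore_succ p U k j ko jo x (m + 1) τ hτ t f
      (cocycleCore_mem_preimage p U k j ko jo (hτ 0))]
    induction i using Fin.cases with
    | zero =>
      rw [hi, j1]
      exact cocycleCore_congr p U k j ko jo x (m + 1) (by ext i; simp [Fin.tail])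
        (fun i => hτ i.succ) _
        (by ext i; simp [Fin.tail]) rfl
    | succ i =>
      rw [cocycleCore_succ p U k j ko jo x m _ _ _ f
        (cocycleCore_mem_preimage p U k j ko jo (hτ _))]
      refine homotopy_apply_congr j ?_ ?_ ?_ _ _
      · simp
      · simp
      · refine (ih (Fin.tail τ) (fun i => hτ i.succ) (Fin.tail t) i hi).trans ?_
        refine cocycleCore_congr p U k j ko jo x m ?_ _ _ ?_ rfl
        · ext l
          simp [Fin.tail]
        · ext l
          simp [Fin.tail]

/-- On the face where the time at position `a` is `0`, the homotopy at that position is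
`k ∘ h`, so the iterated composite is the outer composite of the entries up to `a`
applied to the fiber coordinate, in the trivialization at `a`, of the inner composite of the
later entries. The sub-tuples are arbitrary functions agreeing entrywise with the relevant pieces
of `τ` and `t`, which keeps the induction on `a` free of casts between index types. -/
theorem cocycleCore_face_zero (ho : ∀ α e, (((h α e).1 : B)) = p ((e : E)))
    (j0 : ∀ α e, j α (0, e) = k α (h α e)) (x : B) (f : F)
    (b : ℕ) (τ₂ : Fin (b + 1) → ι) (hτ₂ : ∀ i, x ∈ U (τ₂ i)) (t₂ : Fin b → unitInterval) :
    ∀ (a m : ℕ) (hm : m = a + b + 1)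
      (τ : Fin (m + 1) → ι) (hτ : ∀ i, x ∈ U (τ i)) (t : Fin m → unitInterval)
      (τ₁ : Fin (a + 1) → ι) (hτ₁ : ∀ i, x ∈ U (τ₁ i)) (t₁ : Fin a → unitInterval)
      (α : ι) (_ : α = τ ⟨a, by omega⟩)
      (hmem : (cocycleCore p U k j ko jo x b τ₂ hτ₂ t₂ f : E) ∈ p ⁻¹' (U α)),
      (∀ i : Fin (a + 1), τ₁ i = τ ⟨i, by omega⟩) → (∀ i : Fin a, t₁ i = t ⟨i, by omega⟩) →
      (∀ i : Fin (b + 1), τ₂ i = τ ⟨a + 1 + i, by omega⟩) →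
      (∀ i : Fin b, t₂ i = t ⟨a + 1 + i, by omega⟩) →
      t ⟨a, by omega⟩ = 0 →
      (cocycleCore p U k j ko jo x m τ hτ t f : E) =
        cocycleCore p U k j ko jo x a τ₁ hτ₁ t₁
          (h α ⟨cocycleCore p U k j ko jo x b τ₂ hτ₂ t₂ f, hmem⟩).2 := by
  intro a
  induction a with
  | zero =>
    intro m hm τ hτ t τ₁ hτ₁ t₁ α hα hmem e1 e2 e3 e4 e5
    obtain rfl : m = b + 1 := by omega
    rw [cocycleCore_succ p U k j ko jo x b τ hτ t f
      (cocycleCore_mem_preimage p U k j ko jo (hτ 0)),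
      show t 0 = 0 from e5, j0, cocycleCore]
    refine inverse_apply_congr k (e1 0).symm ?_ ?_ ?_ _
    · rw [ho]
      exact Subtype.prop (cocycleCore p U k j ko jo x b _ _ _ _)
    · refine trivialization_apply_congr h hα.symm ?_ _ _
      refine cocycleCore_congr p U k j ko jo x b ?_ _ _ ?_ rfl
      · ext l
        rw [e3]
        exact congrArg τ (Fin.ext (by simp [add_comm]))
      · funext l
        rw [e4]
        exact congrArg t (Fin.ext (by simp [add_comm]))
  | succ a ih =>
    intro m hm τ hτ t τ₁ hτ₁ t₁ α hα hmem e1 e2 e3 e4 e5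
    obtain ⟨m, rfl⟩ : ∃ m', m = m' + 1 := ⟨a + b + 1, by omega⟩
    rw [cocycleCore_succ p U k j ko jo x m τ hτ t f
      (cocycleCore_mem_preimage p U k j ko jo (hτ 0)),
      cocycleCore_succ p U k j ko jo x a τ₁ hτ₁ t₁ _
      (cocycleCore_mem_preimage p U k j ko jo (hτ₁ 0))]
    refine homotopy_apply_congr j (e1 0).symm (e2 0).symm ?_ _ _
    refine ih m (by omega) _ _ _ _ _ _ α hα hmem (fun i => e1 i.succ) (fun i => e2 i.succ)
      (fun i => ?_) (fun i => ?_) e5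
    · rw [e3]
      exact congrArg τ (Fin.ext (by simp; omega))
    · rw [e4]
      exact congrArg t (Fin.ext (by simp; omega))

/-- The iterated composite depends continuously on all its arguments. These are functions of an
auxiliary parameter `y`, since the domain of the composite depends on the tuple. -/
theorem continuous_cocycleCore [TopologicalSpace E] [TopologicalSpace B] [TopologicalSpace F]
    (kc : ∀ α, Continuous (k α)) (jc : ∀ α, Continuous (j α))
    {Y : Type*} [TopologicalSpace Y] {x : Y → B} (hx : Continuous x)
    {f : Y → F} (hf : Continuous f) :
    ∀ (m : ℕ) (τ : Fin (m + 1) → ι) (hτ : ∀ y i, x y ∈ U (τ i))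
      {t : Y → Fin m → unitInterval}, Continuous t →
      Continuous fun y => (cocycleCore p U k j ko jo (x y) m τ (hτ y) (t y) (f y) : E) := by
  intro m
  induction m with
  | zero =>
    intro τ hτ t ht
    simp only [cocycleCore]
    exact continuous_subtype_val.comp ((kc _).comp ((hx.subtype_mk _).prodMk hf))
  | succ m ih =>
    intro τ hτ t ht
    simp only [cocycleCore]
    have ht0 : Continuous fun y => t y 0 := (continuous_apply 0).comp ht
    have htt : Continuous fun y => (Fin.tail (t y) : Fin m → unitInterval) :=
      continuous_pi fun i => (continuous_apply i.succ).comp ht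
    exact continuous_subtype_val.comp ((jc _).comp
      (ht0.prodMk ((ih (Fin.tail τ) (fun y i => hτ y i.succ) htt).subtype_mk _)))

end Core

/-- There is a family of continuous maps `g_σ : [0,1]^{n-1} × U_σ × F → F`, indexed by the
strictly decreasing tuples `σ = (α₀ > ⋯ > α_n)`, `n ≥ 1`, such that (i) for `n = 1`,
`g_{(α,β)}` is the transition function `ḡ_αβ`; (ii) on each face `t_i = 1` (for interior
`i`) `g_σ` restricts to `g_{σ_i}`, where `σ_i` omits `α_i`; and (iii) on each face
`t_i = 0` it restricts to the composite `g_{(α₀,…,α_i)} ∘ g_{(α_i,…,α_n)}`.  Such a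
family is given explicitly by the formula `cocycle` above; we assert the conditions of it.
In condition (ii) and (iii) the interior index `i` is encoded as `a + 1` where the
tuple `σ` has length `(a + b + 2) + 1`. -/
theorem homotopy_transition_cocycle_exists
    (p : E → B) (hp : Continuous p)
    (U : ι → Set B) (hUopen : ∀ α, IsOpen (U α))
    (h : ∀ α, ↥(p ⁻¹' (U α)) → ↥(U α) × F)
    (k : ∀ α, ↥(U α) × F → ↥(p ⁻¹' (U α)))
    (hc : ∀ α, Continuous (h α)) (kc : ∀ α, Continuous (k α))
    (ho : ∀ α e, (((h α e).1 : B)) = p ((e : E)))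
    (ko : ∀ α z, p ((k α z : E)) = ((z.1 : B)))
    -- `h_α` and `k_α` are mutual fiber homotopy inverses over `U_α`:
    (hkhtpy : ∀ α, ∃ J : unitInterval × ↥(p ⁻¹' (U α)) → ↥(p ⁻¹' (U α)), Continuous J ∧
      (∀ e, J (0, e) = k α (h α e)) ∧ (∀ e, J (1, e) = e) ∧
      ∀ t e, p ((J (t, e) : E)) = p ((e : E)))
    (khhtpy : ∀ α, ∃ K : unitInterval × (↥(U α) × F) → ↥(U α) × F, Continuous K ∧
      (∀ z, K (0, z) = h α (k α z)) ∧ (∀ z, K (1, z) = z) ∧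
      ∀ t z, ((K (t, z)).1 : B) = ((z.1 : B)))
    -- the chosen homotopies `j_α` over `U_α` from `k_α ∘ h_α` (at 0) to the identity (at 1):
    (j : ∀ α, unitInterval × ↥(p ⁻¹' (U α)) → ↥(p ⁻¹' (U α)))
    (jc : ∀ α, Continuous (j α))
    (j0 : ∀ α e, j α (0, e) = k α (h α e)) (j1 : ∀ α e, j α (1, e) = e)
    (jo : ∀ α t e, p ((j α (t, e) : E)) = p ((e : E)))
    [LinearOrder ι] :
    -- each `g_σ`, for `σ` strictly decreasing, is continuous:
    (∀ (n : ℕ) (σ : Fin (n + 2) → ι), StrictAnti σ →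
      Continuous (cocycle p U h k j ko jo n σ)) ∧
    -- (i) for tuples of length two, `g_{(α,β)} (x, f) = ḡ_αβ (x, f)`, i.e. it satisfies
    -- the defining equation `h_α (k_β (x, f)) = (x, ḡ_αβ (x, f))` of the transition function:
    (∀ (σ : Fin 2 → ι), StrictAnti σ →
      ∀ (t : Fin 0 → unitInterval) (x : ↥(⋂ i, U (σ i))) (f : F),
        h (σ 0) ⟨(k (σ 1) (⟨(x : B), Set.mem_iInter.mp x.2 1⟩, f) : E),
            by show p _ ∈ U (σ 0); rw [ko]; exact Set.mem_iInter.mp x.2 0⟩ =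
          (⟨(x : B), Set.mem_iInter.mp x.2 0⟩, cocycle p U h k j ko jo 0 σ (t, x, f))) ∧
    -- (ii) the face `t_i = 1` of `g_σ` is `g_{σ_i}` (`σ_i` omits the `i`-th entry,
    -- `i = a + 1`, and the `i`-th cube coordinate, at position `a`, is omitted as well):
    (∀ (a b : ℕ) (σ : Fin (a + b + 3) → ι), StrictAnti σ →
      ∀ (t : Fin (a + b + 1) → unitInterval) (x : ↥(⋂ i, U (σ i))) (f : F),
        t ⟨a, by omega⟩ = 1 →
        cocycle p U h k j ko jo (a + b + 1) σ (t, x, f) =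
          cocycle p U h k j ko jo (a + b)
            (σ ∘ (⟨a + 1, by omega⟩ : Fin (a + b + 3)).succAbove)
            (t ∘ (⟨a, by omega⟩ : Fin (a + b + 1)).succAbove,
             ⟨(x : B), Set.mem_iInter.mpr fun i => Set.mem_iInter.mp x.2 _⟩, f)) ∧
    -- (iii) the face `t_i = 0` of `g_σ` (with `i = a + 1`) is the composite
    -- `g_{(α₀,…,α_i)} (t₁,…,t_{i-1}, x, g_{(α_i,…,α_n)} (t_{i+1},…,t_{n-1}, x, f))`:
    (∀ (a b : ℕ) (σ : Fin (a + b + 3) → ι), StrictAnti σ →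
      ∀ (t : Fin (a + b + 1) → unitInterval) (x : ↥(⋂ i, U (σ i))) (f : F),
        t ⟨a, by omega⟩ = 0 →
        cocycle p U h k j ko jo (a + b + 1) σ (t, x, f) =
          cocycle p U h k j ko jo a
            (fun i : Fin (a + 2) => σ (Fin.castLE (by omega) i))
            (fun i : Fin a => t (Fin.castLE (by omega) i),
             ⟨(x : B), Set.mem_iInter.mpr fun i => Set.mem_iInter.mp x.2 _⟩,
             cocycle p U h k j ko jo b
               (fun i : Fin (b + 2) => σ ⟨a + 1 + (i : ℕ), by omega⟩)
               (fun i : Fin b => t ⟨a + 1 + (i : ℕ), by omega⟩,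
                ⟨(x : B), Set.mem_iInter.mpr fun i => Set.mem_iInter.mp x.2 _⟩, f))) := by
  refine ⟨fun n σ _ => ?_, fun σ _ t x f => ?_, fun a b σ _ t x f ht => ?_,
    fun a b σ _ t x f ht => ?_⟩
  · exact continuous_snd.comp ((hc _).comp (Continuous.subtype_mk
      (continuous_cocycleCore p U k j ko jo kc jc
        (continuous_subtype_val.comp (continuous_fst.comp continuous_snd))
        (continuous_snd.comp continuous_snd) n (Fin.tail σ) _ continuous_fst) _))
  · refine Prod.ext (Subtype.ext ?_) rfl
    rw [ho]
    exact ko _ _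
  · refine trivialization_apply_congr h ?_ ?_ _ _
    · exact congrArg σ (Fin.succ_succAbove_zero (⟨a, by omega⟩ : Fin (a + b + 2))).symm
    · refine (cocycleCore_face_one p U k j ko jo j1 (x : B) f (a + b) _ _ t _ ht).trans ?_
      refine cocycleCore_congr p U k j ko jo _ _ ?_ _ _ rfl rfl
      funext l
      -- Deleting entry `a + 1` and passing to the tail is the same as deleting entry `a` of the tail.
      exact congrArg σ
        (Fin.succ_succAbove_succ (⟨a, by omega⟩ : Fin (a + b + 2)) l).symm
  · refine trivialization_apply_congr h rfl ?_ _ _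
    exact cocycleCore_face_zero p U h k j ko jo ho j0 (x : B) f b _ _ _ a (a + b + 1) rfl
      _ _ _ _ _ _ _ rfl _ (fun _ => rfl) (fun _ => rfl)
      (fun i => congrArg σ (Fin.ext (by simp; omega))) (fun _ => rfl) ht
end

section
/- (Wirth's Mapping Cylinder Theorem) Let p₀ : E₀ → B and p₁ : E₁ → B be continuous maps and φ : E₀ → E₁ a fiber homotopy equivalence over B. Then there exist a topological space M, a continuous map q : M → [0,1] × B, and continuous maps i₀ : E₀ → M and i₁ : E₁ → M such that: (1) q(i₀(e)) = (0, p₀(e)) and q(i₁(e')) = (1, p₁(e')), and i₀ and i₁ are homeomorphisms onto q⁻¹({0} × B) and q⁻¹({1} × B) respectively; (2) there is a continuous map ψ : M → [0,1] × E₁ over [0,1] × B (where [0,1] × E₁ maps to [0,1] × B by id × p₁) which is a fiber homotopy equivalence over [0,1] × B and satisfies ψ(i₀(e)) = (0, φ(e)) for e ∈ E₀ and ψ(i₁(e')) = (1, e') for e' ∈ E₁. -/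
/-!
The theorem is proved with a modified mapping cylinder, glued from the fibrewise mapping path space
`N` of `φ`: its points are pairs of a point `e₀ : E₀` and a path `γ` in a fibre of `p₁` that starts
at `φ e₀`.  Let `src : N → E₀` be the first coordinate and `tgt : N → E₁` the endpoint `γ 1`.  Then
`M` is the double mapping cylinder of `E₀ ← N → E₁`, that is, `N × [0,1]` with `N × {0}` collapsed
to `E₀` along `src` and `N × {1}` collapsed to `E₁` along `tgt`; the map `ψ` is
`[(e₀, γ), t] ↦ (t, γ t)`.

The ordinary mapping cylinder of `φ` leaves no room for the homotopies near `t = 1`; here the room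
is provided by the fact that `tgt` is shrinkable: it has a section `s` with `s ∘ tgt` homotopic to
the identity *over `E₁`* (`exists_vertical`).  This is Dold's theorem for the path fibration `tgt`.
Its proof starts from a homotopy `h` from the identity to `s ∘ tgt` over `B` only
(`fibHtpy_id_sec`).  The trace in `E₁` of the path `h(·, n)` is a loop `ω` at `tgt n`, and the
square `S(a,b) = tgt h(b, h(a, n))` shows that `ω` is homotopic to the corresponding loop of
`s (tgt n)`, which depends on `tgt n` alone.  Following `h(·, n)` and then `h(·, s (tgt n))`
backwards, and concatenating the path component at each moment with a path in the square that leads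
back to `tgt n`, makes the homotopy vertical.

Given a vertical homotopy `D`, the inverse of `ψ` is `χ(t, e) = [s e, t]`.  The composite `χ ∘ ψ`
is deformed to the identity in two stages: on the slice at `t` the path `γ` is first truncated to
`[0,t]`, and then `D` is applied.  At `t = 0` the truncated path is constant, so the result depends
only on `e₀`; at `t = 1` nothing is truncated and `D` fixes the endpoint, so both stages descend
to `M`.
-/

/-!
Statement 6 (Wirth's Mapping Cylinder Theorem): a fiber homotopy equivalence
`φ : E₀ → E₁` over `B` admits a mapping cylinder `M` over `[0,1] × B`, restricting to
`E₀` at `0` and `E₁` at `1`, together with a characterizing fiber homotopy equivalence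
`ψ : M → [0,1] × E₁` over `[0,1] × B` restricting to `φ` at `0` and the identity at `1`.
-/

universe u

/-- `φ : X → Y` is a fiber homotopy equivalence over `B` (for `pX : X → B`,
`pY : Y → B`): it is a continuous map over `B` admitting a continuous homotopy inverse
over `B`, the two composites being homotopic to the identities through homotopies each of
whose stages is a map over `B`. -/
def IsFiberHomotopyEquivOver {X Y B : Type u}
    [TopologicalSpace X] [TopologicalSpace Y] [TopologicalSpace B]
    (pX : X → B) (pY : Y → B) (φ : X → Y) : Prop :=
  Continuous φ ∧ (∀ x, pY (φ x) = pX x) ∧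
    ∃ ψ : Y → X, Continuous ψ ∧ (∀ y, pX (ψ y) = pY y) ∧
      (∃ H : unitInterval × X → X, Continuous H ∧ (∀ x, H (0, x) = ψ (φ x)) ∧
        (∀ x, H (1, x) = x) ∧ ∀ t x, pX (H (t, x)) = pX x) ∧
      (∃ K : unitInterval × Y → Y, Continuous K ∧ (∀ y, K (0, y) = φ (ψ y)) ∧
        (∀ y, K (1, y) = y) ∧ ∀ t y, pY (K (t, y)) = pY y)

set_option linter.unusedSectionVars false

/-! ### Fibrewise homotopies -/

section Homotopy

variable {X Y Z C C' : Type*} [TopologicalSpace X] [TopologicalSpace Y] [TopologicalSpace Z]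

/-- `f` and `g` are homotopic through maps with the same composite with `q`.  The time parameter
runs over all of `ℝ`, with `f` at time `0` and `g` at time `1`; this is equivalent to a parameter
in the unit interval and avoids coercions. -/
def FibHtpy (q : Y → C) (f g : X → Y) : Prop :=
  ∃ H : ℝ × X → Y, Continuous H ∧ (∀ x, H (0, x) = f x) ∧ (∀ x, H (1, x) = g x) ∧
    ∀ t x, q (H (t, x)) = q (f x)

theorem FibHtpy.symm {q : Y → C} {f g : X → Y} (h : FibHtpy q f g) : FibHtpy q g f := by
  obtain ⟨H, hc, h0, h1, hq⟩ := h
  refine ⟨fun z => H (1 - z.1, z.2), by fun_prop, by simpa using h1, by simpa using h0, ?_⟩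
  intro t x
  rw [hq, ← h1, hq]

theorem FibHtpy.trans {q : Y → C} {f g k : X → Y} (h : FibHtpy q f g) (h' : FibHtpy q g k) :
    FibHtpy q f k := by
  obtain ⟨H, hc, h0, h1, hq⟩ := h
  obtain ⟨K, kc, k0, k1, kq⟩ := h'
  refine ⟨fun z => if z.1 ≤ 1 / 2 then H (2 * z.1, z.2) else K (2 * z.1 - 1, z.2), ?_, ?_, ?_, ?_⟩
  · refine Continuous.if_le (by fun_prop) (by fun_prop) (by fun_prop) (by fun_prop) ?_
    rintro ⟨t, x⟩ ht
    simp only at ht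
    subst ht
    norm_num [h1, k0]
  · intro x
    simp [h0]
  · intro x
    norm_num [k1]
  · intro t x
    dsimp only
    split_ifs
    · exact hq _ _
    · rw [kq, ← h1, hq]

theorem FibHtpy.comp_right {q : Y → C} {f g : X → Y} (h : FibHtpy q f g) {k : Z → X}
    (hk : Continuous k) : FibHtpy q (fun z => f (k z)) (fun z => g (k z)) := by
  obtain ⟨H, hc, h0, h1, hq⟩ := h
  exact ⟨fun z => H (z.1, k z.2), by fun_prop, fun x => h0 _, fun x => h1 _, fun t x => hq _ _⟩

theorem FibHtpy.comp_left {q : Y → C} {f g : X → Y} (h : FibHtpy q f g) {r : Z → C} {k : Y → Z}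
    (hk : Continuous k) (hr : ∀ y, r (k y) = q y) :
    FibHtpy r (fun x => k (f x)) (fun x => k (g x)) := by
  obtain ⟨H, hc, h0, h1, hq⟩ := h
  exact ⟨fun z => k (H z), by fun_prop, fun x => congrArg k (h0 x), fun x => congrArg k (h1 x),
    fun t x => by rw [hr, hr, hq]⟩

theorem FibHtpy.of_unitInterval {q : Y → C} {f g : X → Y} (H : unitInterval × X → Y)
    (hc : Continuous H) (h0 : ∀ x, H (0, x) = f x) (h1 : ∀ x, H (1, x) = g x)
    (hq : ∀ t x, q (H (t, x)) = q (f x)) : FibHtpy q f g := by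
  refine ⟨fun z => H (Set.projIcc 0 1 zero_le_one z.1, z.2), ?_, ?_, ?_, ?_⟩
  · have : Continuous (Set.projIcc (0 : ℝ) 1 zero_le_one) := continuous_projIcc
    exact hc.comp ((this.comp continuous_fst).prodMk continuous_snd)
  · intro x
    simpa using h0 x
  · intro x
    simpa using h1 x
  · intro t x
    exact hq _ _

theorem FibHtpy.exists_unitInterval {q : Y → C} {f g : X → Y} (h : FibHtpy q f g) :
    ∃ H : unitInterval × X → Y, Continuous H ∧ (∀ x, H (0, x) = f x) ∧ (∀ x, H (1, x) = g x) ∧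
      ∀ t x, q (H (t, x)) = q (f x) := by
  obtain ⟨H, hc, h0, h1, hq⟩ := h
  exact ⟨fun z => H (z.1, z.2), by fun_prop, by simpa using h0, by simpa using h1,
    fun t x => hq _ _⟩

end Homotopy

/-! ### The fibrewise mapping path space -/

section PathSpace

variable {E₀ E₁ B X : Type*} [TopologicalSpace E₀] [TopologicalSpace E₁] [TopologicalSpace X]
  {p₀ : E₀ → B} {p₁ : E₁ → B} {φ : E₀ → E₁}

/-- The fibrewise mapping path space of `φ`: pairs of a point of `E₀` and a path in a fibre of `p₁`
starting at its image.  Paths are parametrized by all of `ℝ`; the part that matters is `[0,1]`. -/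
abbrev PathSpace (p₀ : E₀ → B) (p₁ : E₁ → B) (φ : E₀ → E₁) :=
  {x : E₀ × C(ℝ, E₁) // x.2 0 = φ x.1 ∧ ∀ t, p₁ (x.2 t) = p₀ x.1}

namespace PathSpace

/-- The point of `E₀` underlying a point of the path space. -/
def src (n : PathSpace p₀ p₁ φ) : E₀ := n.1.1

/-- The value at time `t` of the path underlying a point of the path space. -/
def path (n : PathSpace p₀ p₁ φ) (t : ℝ) : E₁ := n.1.2 t

/-- The endpoint of the path underlying a point of the path space. -/
def tgt (n : PathSpace p₀ p₁ φ) : E₁ := n.path 1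

theorem path_zero (n : PathSpace p₀ p₁ φ) : n.path 0 = φ n.src := n.2.1

theorem proj_path (n : PathSpace p₀ p₁ φ) (t : ℝ) : p₁ (n.path t) = p₀ n.src := n.2.2 t

theorem proj_tgt (n : PathSpace p₀ p₁ φ) : p₁ n.tgt = p₀ n.src := n.2.2 1

theorem ext' {m n : PathSpace p₀ p₁ φ} (h : m.src = n.src) (h' : ∀ t, m.path t = n.path t) :
    m = n :=
  Subtype.ext (Prod.ext h (ContinuousMap.ext h'))

@[fun_prop]
theorem continuous_src : Continuous (src : PathSpace p₀ p₁ φ → E₀) :=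
  continuous_fst.comp continuous_subtype_val

@[fun_prop]
theorem continuous_path {f : X → PathSpace p₀ p₁ φ} {g : X → ℝ} (hf : Continuous f)
    (hg : Continuous g) : Continuous fun x => (f x).path (g x) := by
  have : Continuous fun x => (f x).1.2 := by fun_prop
  exact this.eval hg

@[fun_prop]
theorem continuous_tgt : Continuous (tgt : PathSpace p₀ p₁ φ → E₁) :=
  continuous_path continuous_id continuous_const

/-- A family of points of the path space is continuous as soon as it is so in both coordinates,
the second one uncurried. -/
theorem continuous_of {f : X → PathSpace p₀ p₁ φ} (h : Continuous fun x => (f x).src)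
    (h' : Continuous fun z : X × ℝ => (f z.1).path z.2) : Continuous f := by
  refine Continuous.subtype_mk (Continuous.prodMk h ?_) _
  exact ContinuousMap.continuous_of_continuous_uncurry _ h'

/-- The point of the path space with underlying point `e` and underlying path `γ`. -/
def mk (e : E₀) (γ : ℝ → E₁) (hγ : Continuous γ) (h0 : γ 0 = φ e) (h : ∀ t, p₁ (γ t) = p₀ e) :
    PathSpace p₀ p₁ φ := ⟨(e, ⟨γ, hγ⟩), h0, h⟩

@[simp] theorem src_mk (e : E₀) (γ : ℝ → E₁) (hγ : Continuous γ) (h0 : γ 0 = φ e)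
    (h : ∀ t, p₁ (γ t) = p₀ e) : (mk e γ hγ h0 h : PathSpace p₀ p₁ φ).src = e := rfl

@[simp] theorem path_mk (e : E₀) (γ : ℝ → E₁) (hγ : Continuous γ) (h0 : γ 0 = φ e)
    (h : ∀ t, p₁ (γ t) = p₀ e) (t : ℝ) : (mk e γ hγ h0 h : PathSpace p₀ p₁ φ).path t = γ t := rfl

@[simp] theorem tgt_mk (e : E₀) (γ : ℝ → E₁) (hγ : Continuous γ) (h0 : γ 0 = φ e)
    (h : ∀ t, p₁ (γ t) = p₀ e) : (mk e γ hγ h0 h : PathSpace p₀ p₁ φ).tgt = γ 1 := rfl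

/-- Reparametrization `t ↦ γ (v t)` of the path; on `[0,1]` this truncates `γ` to `[0,v]`. -/
def scale (n : PathSpace p₀ p₁ φ) (v : ℝ) : PathSpace p₀ p₁ φ :=
  mk n.src (fun t => n.path (v * t)) (by fun_prop) (by simp [path_zero]) (fun t => n.proj_path _)

@[fun_prop]
theorem continuous_scale {f : X → PathSpace p₀ p₁ φ} {g : X → ℝ} (hf : Continuous f)
    (hg : Continuous g) : Continuous fun x => (f x).scale (g x) := by
  refine continuous_of ?_ ?_
  · simp only [scale, src_mk]
    fun_prop
  · simp only [scale, path_mk]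
    fun_prop

@[simp] theorem src_scale (n : PathSpace p₀ p₁ φ) (v : ℝ) : (n.scale v).src = n.src := rfl

@[simp] theorem path_scale (n : PathSpace p₀ p₁ φ) (v t : ℝ) :
    (n.scale v).path t = n.path (v * t) := rfl

theorem tgt_scale (n : PathSpace p₀ p₁ φ) (v : ℝ) : (n.scale v).tgt = n.path v := by
  simp [tgt]

theorem scale_one (n : PathSpace p₀ p₁ φ) : n.scale 1 = n :=
  ext' rfl fun t => by simp

/-! ### Concatenation of paths -/

/-- Points of the path space together with a path in the same fibre of `p₁` that continues the
underlying path. -/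
abbrev Tailed (p₀ : E₀ → B) (p₁ : E₁ → B) (φ : E₀ → E₁) :=
  {w : PathSpace p₀ p₁ φ × C(ℝ, E₁) // w.2 0 = w.1.tgt ∧ ∀ t, p₁ (w.2 t) = p₁ w.1.tgt}

/-- The point of the path space obtained by concatenating the underlying path with the tail. -/
noncomputable def cat (w : Tailed p₀ p₁ φ) : PathSpace p₀ p₁ φ :=
  mk w.1.1.src (fun t => if t ≤ 1 / 2 then w.1.1.path (2 * t) else w.1.2 (2 * t - 1))
    (by
      refine Continuous.if_le (by fun_prop) (by fun_prop) (by fun_prop) (by fun_prop) ?_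
      rintro t rfl
      norm_num [w.2.1, tgt])
    (by simp [path_zero])
    (by
      intro t
      split_ifs
      · exact proj_path _ _
      · exact (w.2.2 _).trans w.1.1.proj_tgt)

theorem tgt_cat (w : Tailed p₀ p₁ φ) : (cat w).tgt = w.1.2 1 := by
  norm_num [cat]

theorem continuous_cat : Continuous (cat : Tailed p₀ p₁ φ → PathSpace p₀ p₁ φ) := by
  refine continuous_of ?_ ?_
  · simp only [cat, src_mk]
    fun_prop
  · simp only [cat, path_mk]
    have h : Continuous fun z : Tailed p₀ p₁ φ × ℝ => z.1.1.2 := by fun_prop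
    refine Continuous.if_le (by fun_prop) (h.eval (by fun_prop)) (by fun_prop) (by fun_prop) ?_
    rintro ⟨w, t⟩ ht
    simp only at ht
    subst ht
    norm_num [w.2.1, tgt]

/-- A homotopy of points with tails, all ending at `tgt n`, gives a vertical homotopy after
concatenation. -/
theorem fibHtpy_cat (F : ℝ × PathSpace p₀ p₁ φ → Tailed p₀ p₁ φ)
    (h : Continuous fun z => (F z).1.1)
    (h' : Continuous fun z : (ℝ × PathSpace p₀ p₁ φ) × ℝ => (F z.1).1.2 z.2)
    (h1 : ∀ z, (F z).1.2 1 = z.2.tgt) :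
    FibHtpy tgt (fun n => cat (F (0, n))) (fun n => cat (F (1, n))) := by
  have hF : Continuous F := by
    refine Continuous.subtype_mk (Continuous.prodMk h ?_) _
    exact ContinuousMap.continuous_of_continuous_uncurry _ h'
  refine ⟨fun z => cat (F z), continuous_cat.comp hF, fun _ => rfl, fun _ => rfl, fun t n => ?_⟩
  simp only [tgt_cat, h1]

theorem fibHtpy_cat_const (f : X → PathSpace p₀ p₁ φ) (hf : Continuous f)
    (F : X → Tailed p₀ p₁ φ)
    (h : ∀ x, (F x).1.1 = f x) (h' : ∀ x t, (F x).1.2 t = (f x).tgt) :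
    FibHtpy tgt (fun x => cat (F x)) f := by
  -- With a constant tail the concatenation is the path at time `min (2 t) 1`; interpolate to `t`.
  refine ⟨fun z => mk (f z.2).src
    (fun t => (f z.2).path ((1 - z.1) * min (2 * t) 1 + z.1 * t)) (by fun_prop)
    (by simp [path_zero]) (fun t => proj_path _ _), ?_, ?_, ?_, ?_⟩
  · refine continuous_of ?_ ?_
    · simp only [src_mk]
      fun_prop
    · simp only [path_mk]
      fun_prop
  · intro x
    refine ext' ?_ fun t => ?_
    · simp [cat, h]
    · simp only [cat, path_mk, h, h']
      split_ifs with ht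
      · rw [min_eq_left (by linarith)]
        simp
      · rw [min_eq_right (by linarith)]
        simp [tgt]
  · intro x
    exact ext' rfl fun t => by simp
  · intro v x
    rw [tgt_cat, h', tgt_mk]
    norm_num
    rfl

/-! ### Making a homotopy vertical -/

/-- If the section `s` of `tgt` inverts it up to homotopy over `B`, then it does so up to homotopy
over `E₁`. -/
theorem exists_vertical (s : E₁ → PathSpace p₀ p₁ φ) (hs : Continuous s)
    (hst : ∀ e, (s e).tgt = e)
    (hB : FibHtpy (fun n : PathSpace p₀ p₁ φ => p₀ n.src) id (fun n => s n.tgt)) :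
    FibHtpy (tgt : PathSpace p₀ p₁ φ → E₁) id (fun n => s n.tgt) := by
  obtain ⟨h, hc, h0, h1, hq⟩ := hB
  simp only [id] at h0 hq
  have hp : ∀ t n, p₁ (h (t, n)).tgt = p₁ n.tgt := fun t n =>
    (h (t, n)).proj_tgt.trans ((hq t n).trans n.proj_tgt.symm)
  -- `t ↦ (c t, y b t)` starts at `(1, b)` and runs down the right side of the square for
  -- `t ∈ [0,1/3]`, back along the bottom for `t ∈ [1/3,2/3]`, and up the left side to `(0, 1)` for
  -- `t ∈ [2/3,1]`; scaling the first coordinate by `a` and taking `b = 1` gives the path from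
  -- `(a, 1)`.
  let c : ℝ → ℝ := fun t => max 0 (min 1 (2 - 3 * t))
  let y : ℝ → ℝ → ℝ := fun b t => b * max (1 - 3 * t) 0 + max (3 * t - 2) 0
  have hcc : Continuous c := by fun_prop
  have hyc : Continuous fun z : ℝ × ℝ => y z.1 z.2 := by fun_prop
  have c0 : c 0 = 1 := by norm_num [c]
  have c1 : c 1 = 0 := by norm_num [c]
  have y0 : ∀ b, y b 0 = b := fun b => by norm_num [y]
  have y1 : ∀ b, y b 1 = 1 := fun b => by norm_num [y]
  let S : PathSpace p₀ p₁ φ → ℝ → ℝ → E₁ := fun n a b => (h (b, h (a, n))).tgt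
  have hS : Continuous fun z : PathSpace p₀ p₁ φ × ℝ × ℝ => S z.1 z.2.1 z.2.2 := by fun_prop
  have hSp : ∀ n a b, p₁ (S n a b) = p₁ n.tgt := fun n a b => by simp only [S, hp]
  have S0 : ∀ n b, S n 0 b = (h (b, n)).tgt := fun n b => by simp only [S, h0]
  have Sb0 : ∀ n a, S n a 0 = (h (a, n)).tgt := fun n b => by simp only [S, h0]
  have Sb1 : ∀ n a, S n a 1 = (h (a, n)).tgt := fun n b => by simp only [S, h1, hst]
  have S1 : ∀ n b, S n 1 b = (h (b, s n.tgt)).tgt := fun n b => by simp only [S, h1]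
  have t1 : ∀ n, (h (1, n)).tgt = n.tgt := fun n => by rw [h1, hst]
  have hcurve : ∀ (n : PathSpace p₀ p₁ φ) (f g : ℝ → ℝ), Continuous f → Continuous g →
      Continuous fun t => S n (f t) (g t) := fun n f g hf hg =>
    hS.comp (continuous_const.prodMk (hf.prodMk hg))
  -- The four stages: the tail grows on `n`; the point moves along `h (·, n)`; it moves back along
  -- `h (·, s n.tgt)`; the tail shrinks on `s n.tgt`.
  let FA : ℝ × PathSpace p₀ p₁ φ → Tailed p₀ p₁ φ := fun z =>
    ⟨(z.2, ⟨fun t => S z.2 0 ((1 - z.1) * y 1 t + z.1), hcurve _ _ _ (by fun_prop) (by fun_prop)⟩),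
      by simp [y0, S0, t1], fun t => hSp _ _ _⟩
  let FB : ℝ × PathSpace p₀ p₁ φ → Tailed p₀ p₁ φ := fun z =>
    ⟨(h z, ⟨fun t => S z.2 (z.1 * c t) (y 1 t), hcurve _ _ _ (by fun_prop) (by fun_prop)⟩),
      by simp [y0, c0, Sb1], fun t => (hSp _ _ _).trans (hp _ _).symm⟩
  let FC : ℝ × PathSpace p₀ p₁ φ → Tailed p₀ p₁ φ := fun z =>
    ⟨(h (z.1, s z.2.tgt), ⟨fun t => S z.2 (c t) (y z.1 t),
      hcurve _ _ _ (by fun_prop) (by fun_prop)⟩),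
      by simp [y0, c0, S1], fun t => (hSp _ _ _).trans (by rw [hp, hst])⟩
  let FD : ℝ × PathSpace p₀ p₁ φ → Tailed p₀ p₁ φ := fun z =>
    ⟨(s z.2.tgt, ⟨fun t => S z.2 0 ((1 - z.1) * (c t + y 0 t) + z.1),
      hcurve _ _ _ (by fun_prop) (by fun_prop)⟩),
      by simp [y0, c0, S0, t1, hst], fun t => (hSp _ _ _).trans (by rw [hst])⟩
  have hA := fibHtpy_cat FA continuous_snd
    (hS.comp (by fun_prop : Continuous fun z : (ℝ × PathSpace p₀ p₁ φ) × ℝ =>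
      (z.1.2, (0 : ℝ), (1 - z.1.1) * y 1 z.2 + z.1.1)))
    (fun z => by simp [FA, y1, S0, t1])
  have hBB := fibHtpy_cat FB hc
    (hS.comp (by fun_prop : Continuous fun z : (ℝ × PathSpace p₀ p₁ φ) × ℝ =>
      (z.1.2, z.1.1 * c z.2, y 1 z.2)))
    (fun z => by simp [FB, y1, c1, S0, t1])
  have hC := fibHtpy_cat FC
    (by fun_prop : Continuous fun z : ℝ × PathSpace p₀ p₁ φ => h (z.1, s z.2.tgt))
    (hS.comp (by fun_prop : Continuous fun z : (ℝ × PathSpace p₀ p₁ φ) × ℝ =>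
      (z.1.2, c z.2, y z.1.1 z.2)))
    (fun z => by simp [FC, y1, c1, S0, t1])
  have hD := fibHtpy_cat FD
    (by fun_prop : Continuous fun z : ℝ × PathSpace p₀ p₁ φ => s z.2.tgt)
    (hS.comp (by fun_prop : Continuous fun z : (ℝ × PathSpace p₀ p₁ φ) × ℝ =>
      (z.1.2, (0 : ℝ), (1 - z.1.1) * (c z.2 + y 0 z.2) + z.1.1)))
    (fun z => by simp [FD, y1, c1, S0, t1])
  have eAB : ∀ n, FA (0, n) = FB (0, n) := fun n =>
    Subtype.ext (Prod.ext (h0 n).symm (ContinuousMap.ext fun t => by simp [FA, FB]))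
  have eBC : ∀ n, FB (1, n) = FC (1, n) := fun n =>
    Subtype.ext (Prod.ext (by simp [FB, FC, h1, hst])
      (ContinuousMap.ext fun t => by simp [FB, FC]))
  -- On the bottom and on the left side one coordinate vanishes, and `S` restricts to the same loop
  -- on these two sides, so its value there depends only on the sum of the coordinates.
  have eCD : ∀ n, FC (0, n) = FD (0, n) := fun n => by
    refine Subtype.ext (Prod.ext (by simp [FC, FD, h0]) (ContinuousMap.ext fun t => ?_))
    simp only [FC, FD, ContinuousMap.coe_mk, sub_zero, one_mul, add_zero]
    rcases le_total t (2 / 3) with ht | ht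
    · have : y 0 t = 0 := by
        simp only [y, zero_mul, zero_add]
        exact max_eq_right (by linarith)
      rw [this, Sb0, S0, add_zero]
    · have : c t = 0 := max_eq_left ((min_le_right _ _).trans (by linarith))
      rw [this, zero_add]
  have iA := fibHtpy_cat_const id continuous_id (fun n => FA (1, n)) (fun n => rfl)
    (fun n t => by simp [FA, S0, t1])
  have iD := fibHtpy_cat_const (fun n : PathSpace p₀ p₁ φ => s n.tgt) (by fun_prop)
    (fun n => FD (1, n)) (fun n => rfl) (fun n t => by simp [FD, S0, t1, hst])
  simp only [← eAB] at hBB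
  simp only [← eBC] at hC
  simp only [← eCD] at hD
  exact iA.symm.trans (hA.symm.trans (hBB.trans (hC.symm.trans (hD.trans iD))))

/-- The inclusion of `E₀` into the path space by constant paths. -/
def const (hφ : ∀ e, p₁ (φ e) = p₀ e) (e : E₀) : PathSpace p₀ p₁ φ :=
  mk e (fun _ => φ e) continuous_const rfl (fun _ => hφ e)

theorem continuous_const' (hφc : Continuous φ) (hφ : ∀ e, p₁ (φ e) = p₀ e) :
    Continuous (const hφ) := by
  refine continuous_of continuous_id ?_
  simp only [const, path_mk]
  fun_prop

/-- A fiber homotopy inverse `g` of `φ`, together with a homotopy from `φ ∘ g` to the identity,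
gives a section of `tgt` that is inverse to it up to homotopy over `B`. -/
theorem fibHtpy_id_sec (hφc : Continuous φ) (hφ : ∀ e, p₁ (φ e) = p₀ e) (g : E₁ → E₀)
    (hgc : Continuous g) (hg : ∀ e, p₀ (g e) = p₁ e)
    (H : FibHtpy p₀ (fun e => g (φ e)) id) (K : FibHtpy p₁ (fun e => φ (g e)) id) :
    ∃ s : E₁ → PathSpace p₀ p₁ φ, Continuous s ∧ (∀ e, (s e).tgt = e) ∧
      FibHtpy (fun n : PathSpace p₀ p₁ φ => p₀ n.src) id (fun n => s n.tgt) := by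
  obtain ⟨k, kc, k0, k1, kq⟩ := K
  let s : E₁ → PathSpace p₀ p₁ φ := fun e => mk (g e) (fun t => k (t, e)) (by fun_prop) (k0 e)
    (fun t => by rw [kq, hφ])
  have hs : Continuous s := by
    refine continuous_of hgc ?_
    simp only [s, path_mk]
    fun_prop
  refine ⟨s, hs, fun e => k1 e, ?_⟩
  have σc := continuous_const' hφc hφ
  -- Along `id ∼ const ∘ src ∼ const ∘ g ∘ φ ∘ src ∼ const ∘ g ∘ tgt ∼ s ∘ tgt`.
  have step1 : FibHtpy (fun n : PathSpace p₀ p₁ φ => p₀ n.src) id (fun n => const hφ n.src) := by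
    refine ⟨fun z => z.2.scale (1 - z.1), by fun_prop, fun n => ?_, fun n => ?_, fun t n => rfl⟩
    · simp [scale_one]
    · exact ext' rfl fun t => by simp [const, path_zero]
  have step2 : FibHtpy (fun n : PathSpace p₀ p₁ φ => p₀ n.src)
      (fun n : PathSpace p₀ p₁ φ => const hφ (g (φ n.src))) (fun n => const hφ n.src) :=
    (H.comp_left (r := fun n : PathSpace p₀ p₁ φ => p₀ n.src) σc (fun _ => rfl)).comp_right
      continuous_src
  have step3 : FibHtpy (fun n : PathSpace p₀ p₁ φ => p₀ n.src)
      (fun n : PathSpace p₀ p₁ φ => const hφ (g (φ n.src))) (fun n => const hφ (g n.tgt)) := by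
    refine ⟨fun z => const hφ (g (z.2.path z.1)), σc.comp (by fun_prop), fun n => ?_, fun n => rfl,
      fun t n => ?_⟩
    · simp only [path_zero]
    · simp only [const, src_mk, hg, hφ, proj_path]
  have step4 : FibHtpy (fun n : PathSpace p₀ p₁ φ => p₀ n.src)
      (fun n : PathSpace p₀ p₁ φ => const hφ (g n.tgt)) (fun n => s n.tgt) := by
    refine ⟨fun z => (s z.2.tgt).scale z.1, by fun_prop, fun n => ?_, fun n => ?_, fun t n => rfl⟩
    · exact ext' rfl fun t => by simp [const, s, k0]
    · exact scale_one _
  exact step1.trans (step2.symm.trans (step3.trans step4))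

end PathSpace

/-! ### The double mapping cylinder -/

open PathSpace

/-- The gluing relation of the double mapping cylinder of `E₀ ← N → E₁`, where `N` is the path
space: points of `N × [0,1]` at the same height `t` are identified when `t = 0` and their images in
`E₀` agree, or `t = 1` and their images in `E₁` agree, or they are equal.  The conditions are written
so that only the relevant one is not vacuous at each height. -/
def cylSetoid (p₀ : E₀ → B) (p₁ : E₁ → B) (φ : E₀ → E₁) :
    Setoid (PathSpace p₀ p₁ φ × unitInterval) where
  r a b := a.2 = b.2 ∧ (a.2 = 0 → a.1.src = b.1.src) ∧ (a.2 = 1 → a.1.tgt = b.1.tgt) ∧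
    (a.2 ≠ 0 → a.2 ≠ 1 → a.1 = b.1)
  iseqv := by
    refine ⟨fun a => ⟨rfl, fun _ => rfl, fun _ => rfl, fun _ _ => rfl⟩, ?_, ?_⟩
    · rintro ⟨n, t⟩ ⟨n', t'⟩ ⟨h, h0, h1, h2⟩
      dsimp only at *
      subst h
      exact ⟨rfl, fun h => (h0 h).symm, fun h => (h1 h).symm, fun h h' => (h2 h h').symm⟩
    · rintro ⟨n, t⟩ ⟨n', t'⟩ ⟨n'', t''⟩ ⟨h, h0, h1, h2⟩ ⟨k, k0, k1, k2⟩
      dsimp only at *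
      subst h k
      exact ⟨rfl, fun h => (h0 h).trans (k0 h), fun h => (h1 h).trans (k1 h),
        fun h h' => (h2 h h').trans (k2 h h')⟩

/-- The double mapping cylinder of `E₀ ← N → E₁`, where `N` is the path space. -/
abbrev Cyl (p₀ : E₀ → B) (p₁ : E₁ → B) (φ : E₀ → E₁) := Quotient (cylSetoid p₀ p₁ φ)

namespace Cyl

/-- The class in the double mapping cylinder of a point of the path space at height `t`. -/
def mk (n : PathSpace p₀ p₁ φ) (t : unitInterval) : Cyl p₀ p₁ φ := Quotient.mk _ (n, t)

@[fun_prop]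
theorem continuous_mk {f : X → PathSpace p₀ p₁ φ} {g : X → unitInterval} (hf : Continuous f)
    (hg : Continuous g) : Continuous fun x => mk (f x) (g x) :=
  continuous_quotient_mk'.comp (hf.prodMk hg)

theorem exists_mk (x : Cyl p₀ p₁ φ) : ∃ n t, x = mk n t := by
  obtain ⟨n, t⟩ := x
  exact ⟨n, t, rfl⟩

theorem mk_zero {n n' : PathSpace p₀ p₁ φ} (h : n.src = n'.src) : mk n 0 = mk n' 0 :=
  Quotient.sound ⟨rfl, fun _ => h, fun h => absurd h zero_ne_one, fun h => absurd rfl h⟩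

theorem mk_one {n n' : PathSpace p₀ p₁ φ} (h : n.tgt = n'.tgt) : mk n 1 = mk n' 1 :=
  Quotient.sound ⟨rfl, fun h => absurd h one_ne_zero, fun _ => h, fun _ h => absurd rfl h⟩

/-- The universal property of the double mapping cylinder. -/
theorem exists_desc {Y : Type*} [TopologicalSpace Y] (F : PathSpace p₀ p₁ φ × unitInterval → Y)
    (hF : Continuous F) (h0 : ∀ n n', n.src = n'.src → F (n, 0) = F (n', 0))
    (h1 : ∀ n n', n.tgt = n'.tgt → F (n, 1) = F (n', 1)) :
    ∃ f : Cyl p₀ p₁ φ → Y, Continuous f ∧ ∀ n t, f (mk n t) = F (n, t) := by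
  have hr : ∀ a b, (cylSetoid p₀ p₁ φ).r a b → F a = F b := by
    rintro ⟨n, t⟩ ⟨n', t'⟩ ⟨h, k0, k1, k2⟩
    dsimp only at *
    subst h
    by_cases ht : t = 0
    · subst ht
      exact h0 _ _ (k0 rfl)
    · by_cases ht' : t = 1
      · subst ht'
        exact h1 _ _ (k1 rfl)
      · rw [k2 ht ht']
  exact ⟨Quotient.lift F hr, hF.quotient_lift hr, fun _ _ => rfl⟩

/-- A homotopy of the path space, depending on the height `t`, induces one of the double mapping
cylinder when it is compatible with `src` at `t = 0` and with `tgt` at `t = 1`. -/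
theorem fibHtpy_desc (q : Cyl p₀ p₁ φ → unitInterval × B)
    (hq : ∀ n t, q (mk n t) = (t, p₀ n.src))
    (Φ : ℝ × PathSpace p₀ p₁ φ × unitInterval → PathSpace p₀ p₁ φ) (hΦ : Continuous Φ)
    (h0 : ∀ v n n', n.src = n'.src → (Φ (v, n, 0)).src = (Φ (v, n', 0)).src)
    (h1 : ∀ v n n', n.tgt = n'.tgt → (Φ (v, n, 1)).tgt = (Φ (v, n', 1)).tgt)
    (hp : ∀ v n t, p₀ (Φ (v, n, t)).src = p₀ n.src)
    (f g : Cyl p₀ p₁ φ → Cyl p₀ p₁ φ) (hf : ∀ n t, f (mk n t) = mk (Φ (0, n, t)) t)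
    (hg : ∀ n t, g (mk n t) = mk (Φ (1, n, t)) t) : FibHtpy q f g := by
  -- Products with `ℝ` preserve the quotient map since maps may be curried: `ℝ` is locally compact.
  let F : PathSpace p₀ p₁ φ × unitInterval → C(ℝ, Cyl p₀ p₁ φ) := fun a =>
    ⟨fun v => mk (Φ (v, a)) a.2, by fun_prop⟩
  have hF : Continuous F := by
    refine ContinuousMap.continuous_of_continuous_uncurry _ ?_
    change Continuous fun z : (PathSpace p₀ p₁ φ × unitInterval) × ℝ => mk (Φ (z.2, z.1)) z.1.2
    fun_prop
  obtain ⟨G, hG, hGm⟩ := exists_desc F hF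
    (fun n n' h => ContinuousMap.ext fun v => mk_zero (h0 v n n' h))
    (fun n n' h => ContinuousMap.ext fun v => mk_one (h1 v n n' h))
  refine ⟨fun z => G z.2 z.1, (hG.comp continuous_snd).eval continuous_fst, ?_, ?_, ?_⟩
  · rintro ⟨n, t⟩
    exact (congrArg (fun k => k 0) (hGm n t)).trans (hf n t).symm
  · rintro ⟨n, t⟩
    exact (congrArg (fun k => k 1) (hGm n t)).trans (hg n t).symm
  · rintro v ⟨n, t⟩
    have e1 : G (mk n t) v = mk (Φ (v, n, t)) t := congrArg (fun k => k v) (hGm n t)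
    change q (G (mk n t) v) = q (f (mk n t))
    rw [e1, hf, hq, hq, hp, hp]

end Cyl

end PathSpace

/-- **Wirth's mapping cylinder theorem.**  If `φ : E₀ → E₁` is a fiber homotopy
equivalence over `B`, there are a space `M` over `[0,1] × B` and maps `i₀ : E₀ → M`,
`i₁ : E₁ → M` such that (1) `i₀`, `i₁` are homeomorphisms onto the parts of `M` over
`{0} × B` and `{1} × B` respectively; and (2) there is a characterizing fiber homotopy
equivalence `ψ : M → [0,1] × E₁` over `[0,1] × B` with `ψ ∘ i₀ = (0, φ ·)` and
`ψ ∘ i₁ = (1, ·)`. -/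
theorem wirth_mapping_cylinder
    {E₀ E₁ B : Type u} [TopologicalSpace E₀] [TopologicalSpace E₁] [TopologicalSpace B]
    (p₀ : E₀ → B) (p₁ : E₁ → B) (hp₀ : Continuous p₀) (hp₁ : Continuous p₁)
    (φ : E₀ → E₁) (hφ : IsFiberHomotopyEquivOver p₀ p₁ φ) :
    ∃ (M : TopCat.{u}) (q : M → unitInterval × B) (i₀ : E₀ → M) (i₁ : E₁ → M),
      Continuous q ∧ Continuous i₀ ∧ Continuous i₁ ∧
      -- (1) `M` restricts to `E₀` at `0` and to `E₁` at `1`: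
      (∀ e, q (i₀ e) = (0, p₀ e)) ∧ (∀ e', q (i₁ e') = (1, p₁ e')) ∧
      Topology.IsEmbedding i₀ ∧ Set.range i₀ = q ⁻¹' (({0} : Set unitInterval) ×ˢ (Set.univ : Set B)) ∧
      Topology.IsEmbedding i₁ ∧ Set.range i₁ = q ⁻¹' (({1} : Set unitInterval) ×ˢ (Set.univ : Set B)) ∧
      -- (2) the characterizing fiber homotopy equivalence `ψ` over `[0,1] × B`:
      ∃ ψ : M → unitInterval × E₁,
        IsFiberHomotopyEquivOver q (fun z => (z.1, p₁ z.2)) ψ ∧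
        (∀ e, ψ (i₀ e) = (0, φ e)) ∧ (∀ e', ψ (i₁ e') = (1, e')) := by
  obtain ⟨hφc, hφp, g, hgc, hgp, ⟨H, Hc, H0, H1, Hp⟩, ⟨K, Kc, K0, K1, Kp⟩⟩ := hφ
  have HH : FibHtpy p₀ (fun e => g (φ e)) id :=
    .of_unitInterval H Hc H0 H1 fun t e => by rw [Hp, hgp, hφp]
  have KK : FibHtpy p₁ (fun e => φ (g e)) id :=
    .of_unitInterval K Kc K0 K1 fun t e => by rw [Kp, hφp, hgp]
  obtain ⟨s, hs, hst, hB⟩ := PathSpace.fibHtpy_id_sec hφc hφp g hgc hgp HH KK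
  obtain ⟨D, Dc, D0, D1, Dq⟩ := PathSpace.exists_vertical s hs hst hB
  obtain ⟨h, hc, h0, h1, hq⟩ := hB
  simp only [id] at h0 hq D0 Dq
  have hs0 : ∀ e, p₀ (s e).src = p₁ e := fun e => by
    rw [← (s e).proj_tgt, hst]
  obtain ⟨q, qc, hqm⟩ := Cyl.exists_desc (p₀ := p₀) (p₁ := p₁) (φ := φ)
    (fun a => (a.2, p₀ a.1.src)) (by fun_prop) (fun n n' e => by rw [e])
    (fun n n' e => by simp only [← n.proj_tgt, ← n'.proj_tgt, e])
  -- A left inverse of the inclusion of `E₀`: at height `1` the homotopy `h` factors through `tgt`.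
  obtain ⟨r₀, r₀c, hr₀⟩ := Cyl.exists_desc (p₀ := p₀) (p₁ := p₁) (φ := φ)
    (fun a => (h ((a.2 : ℝ), a.1)).src) (by fun_prop) (fun n n' e => by simpa [h0] using e)
    (fun n n' e => by simp [h1, e])
  obtain ⟨ψ, ψc, hψ⟩ := Cyl.exists_desc (p₀ := p₀) (p₁ := p₁) (φ := φ)
    (fun a => (a.2, a.1.path a.2)) (by fun_prop) (fun n n' e => by simp [PathSpace.path_zero, e])
    (fun n n' e => by simpa [PathSpace.tgt] using e)
  have σc := PathSpace.continuous_const' hφc hφp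
  let i₀ : E₀ → Cyl p₀ p₁ φ := fun e => Cyl.mk (PathSpace.const hφp e) 0
  let i₁ : E₁ → Cyl p₀ p₁ φ := fun e => Cyl.mk (s e) 1
  have i₀c : Continuous i₀ := Cyl.continuous_mk σc continuous_const
  have i₁c : Continuous i₁ := Cyl.continuous_mk hs continuous_const
  have ψ0 : ∀ e, ψ (i₀ e) = (0, φ e) := fun e => hψ _ _
  have ψ1 : ∀ e, ψ (i₁ e) = (1, e) := fun e => (hψ _ _).trans (by
    simpa [PathSpace.tgt] using hst e)
  have q0 : ∀ e, q (i₀ e) = (0, p₀ e) := fun e => hqm _ _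
  have q1 : ∀ e, q (i₁ e) = (1, p₁ e) := fun e => (hqm _ _).trans (by rw [hs0])
  refine ⟨TopCat.of (Cyl p₀ p₁ φ), q, i₀, i₁, qc, i₀c, i₁c, q0, q1, ?_, ?_, ?_, ?_, ψ,
    ⟨ψc, ?_, fun z => Cyl.mk (s z.2) z.1, ?_, ?_, ?_, ?_⟩, ψ0, ψ1⟩
  · refine Function.LeftInverse.isEmbedding (f := r₀) (fun e => ?_) r₀c i₀c
    exact (hr₀ _ _).trans (by simp [h0, PathSpace.const])
  · ext x
    constructor
    · rintro ⟨e, rfl⟩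
      simp [q0]
    · obtain ⟨n, t, rfl⟩ := Cyl.exists_mk x
      intro hx
      have ht : t = 0 := by
        have := hx.1
        rwa [hqm] at this
      subst ht
      exact ⟨n.src, Cyl.mk_zero rfl⟩
  · exact Function.LeftInverse.isEmbedding (f := fun x => (ψ x).2) (fun e => by simp [ψ1])
      (by fun_prop) i₁c
  · ext x
    constructor
    · rintro ⟨e, rfl⟩
      simp [q1]
    · obtain ⟨n, t, rfl⟩ := Cyl.exists_mk x
      intro hx
      have ht : t = 1 := by
        have := hx.1
        rwa [hqm] at this
      subst ht
      exact ⟨n.tgt, Cyl.mk_one (hst _)⟩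
  · intro x
    obtain ⟨n, t, rfl⟩ := Cyl.exists_mk x
    simp only [hqm, hψ, PathSpace.proj_path]
  · exact Cyl.continuous_mk (by fun_prop) (by fun_prop)
  · rintro ⟨t, e⟩
    rw [hqm, hs0]
  · obtain ⟨m, -, hm⟩ := Cyl.exists_desc (p₀ := p₀) (p₁ := p₁) (φ := φ)
      (fun a => Cyl.mk (a.1.scale a.2) a.2) (by fun_prop) (fun n n' e => Cyl.mk_zero e)
      (fun n n' e => Cyl.mk_one (by simpa [PathSpace.scale_one] using e))
    -- `m` truncates the path at height `t` to `[0,t]`.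
    have st1 : FibHtpy q (fun x => x) m := by
      refine Cyl.fibHtpy_desc q hqm (fun z => z.2.1.scale ((1 - z.1) + z.1 * z.2.2))
        (by fun_prop) (fun v n n' e => e) (fun v n n' e => ?_) (fun v n t => rfl) _ _
        (fun n t => ?_) (fun n t => ?_)
      · simpa [PathSpace.scale_one] using e
      · simp [PathSpace.scale_one]
      · simp [hm]
    have st2 : FibHtpy q m (fun x => Cyl.mk (s (ψ x).2) (ψ x).1) := by
      refine Cyl.fibHtpy_desc q hqm (fun z => D (z.1, z.2.1.scale z.2.2)) (by fun_prop)
        (fun v n n' e => ?_) (fun v n n' e => ?_) (fun v n t => ?_) _ _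
        (fun n t => ?_) (fun n t => ?_)
      · have : n.scale 0 = n'.scale 0 :=
          PathSpace.ext' e fun t => by simp [PathSpace.path_zero, e]
        simp [this]
      · simpa [Dq, PathSpace.scale_one] using e
      · rw [← (D (v, n.scale t)).proj_tgt, Dq, (n.scale t).proj_tgt, PathSpace.src_scale]
      · simp [hm, D0]
      · simp [hψ, D1, PathSpace.tgt_scale]
    obtain ⟨L, Lc, L0, L1, Lq⟩ := (st1.trans st2).symm.exists_unitInterval
    refine ⟨L, Lc, L0, L1, fun t x => ?_⟩
    rw [Lq, ← Lq 1 x, L1]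
  · have st : FibHtpy (fun z : unitInterval × E₁ => (z.1, p₁ z.2))
        (fun z => ψ (Cyl.mk (s z.2) z.1)) (fun z => z) := by
      refine ⟨fun z => (z.2.1, (s z.2.2).path ((1 - z.1) * z.2.1 + z.1)), by fun_prop,
        fun z => ?_, fun z => ?_, fun v z => ?_⟩
      · simp [hψ]
      · have := hst z.2
        simp only [PathSpace.tgt] at this
        simp [this]
      · simp [hψ, PathSpace.proj_path]
    obtain ⟨L, Lc, L0, L1, Lq⟩ := st.exists_unitInterval
    refine ⟨L, Lc, L0, L1, fun t x => ?_⟩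
    exact (Lq t x).trans (by rw [← Lq 1 x, L1])
end
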